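/- arXiv:2506.11573 — 2 statements merged into one kernel-verified Lean document; each statement's English description precedes it below -/
import Mathlib

section
/- Let K satisfy Assumption A, let T > 0, and let f_in be a nonzero nonnegative Radon measure on (0,∞) with ∫(1+v^γ) f_in(dv) < ∞ and ∫ v f_in(dv) < ∞. Then there exists a mass-conserving weak solution of the coagulation equation on [0,T] with kernel K and initial datum f_in if and only if f_in = M·δ_V for some M, V ∈ (0,∞). -/
open MeasureTheory Set Filter

noncomputable section

/-- Assumption A on the coagulation kernel `K(v,v') = h(v,v') g(v/(v+v'))`. -/
structure KernelAssumptionA (K : ℝ → ℝ → ℝ) (h : ℝ → ℝ → ℝ) (g : ℝ → ℝ)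
    (γ H H₀ H₁ G₀ G₁ k : ℝ) : Prop where
  K_nonneg : ∀ v v', 0 ≤ v → 0 ≤ v' → 0 ≤ K v v'
  K_eq : ∀ v v', 0 ≤ v → 0 ≤ v' → 0 < v + v' →
      K v v' = h v v' * g (v / (v + v'))
  h_cont : ContinuousOn (fun p : ℝ × ℝ => h p.1 p.2) (Ici 0 ×ˢ Ici 0)
  h_symm : ∀ v v', h v v' = h v' v
  γ_gt_one : 1 < γ
  H_gt_one : 1 < H
  H₀_pos : 0 < H₀
  h_lower : ∀ v v', 0 ≤ v → 0 ≤ v' → H < v + v' →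
      H₀ * (v ^ γ + v' ^ γ) ≤ h v v'
  h_posOn : ∀ R : ℝ, 0 < R → ∃ C : ℝ, 0 < C ∧
      ∀ v ∈ Icc (1 / R) R, ∀ v' ∈ Icc (1 / R) R, C ≤ h v v'
  H₁_pos : 0 < H₁
  h_upper : ∀ v v', 0 ≤ v → 0 ≤ v' → h v v' ≤ H₁ * (v ^ γ + v' ^ γ)
  g_cont : ContinuousOn g (Icc 0 1)
  g_symm : ∀ x ∈ Icc (0 : ℝ) 1, g x = g (1 - x)
  g_half : g (1 / 2) = 0
  G₀_pos : 0 < G₀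
  G₁_pos : 0 < G₁
  k_ge_one : 1 ≤ k
  g_lower : ∀ x ∈ Icc (0 : ℝ) 1, G₀ * |x - 1 / 2| ^ k ≤ g x
  g_upper : ∀ x ∈ Icc (0 : ℝ) 1, g x ≤ G₁

/-- Weak solution of the coagulation equation on `[0, T]` with kernel `K`
and initial datum `fin`, in the sense of measures on `(0,∞)`. -/
structure IsWeakSolution (K : ℝ → ℝ → ℝ) (γ T : ℝ)
    (f : ℝ → Measure ℝ) (fin : Measure ℝ) : Prop where
  conc : ∀ t ∈ Icc (0 : ℝ) T, f t (Iic 0) = 0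
  time_cont : ∀ φ : ℝ → ℝ, Continuous φ → (∃ M : ℝ, ∀ v, |φ v| ≤ M) →
      ContinuousOn (fun t => ∫ v, φ v ∂(f t)) (Icc (0 : ℝ) T)
  moment_bound : ∃ C : ℝ, ∀ t ∈ Icc (0 : ℝ) T,
      Integrable (fun v => 1 + v ^ γ) (f t) ∧ (∫ v, (1 + v ^ γ) ∂(f t)) ≤ C
  weak_form : ∀ φ : ℝ → ℝ, Continuous φ → HasCompactSupport φ →
      tsupport φ ⊆ Ioi 0 → ∀ t ∈ Icc (0 : ℝ) T,
      (∫ v, φ v ∂(f t)) - (∫ v, φ v ∂fin) =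
        (1 / 2) * ∫ s in (0 : ℝ)..t,
          (∫ v, (∫ v', K v v' * (φ (v + v') - φ v - φ v') ∂(f s)) ∂(f s))

/-- The solution conserves mass on `[0, T]`. -/
def IsMassConserving (T : ℝ) (f : ℝ → Measure ℝ) (fin : Measure ℝ) : Prop :=
  Integrable (fun v => v) fin ∧
    ∀ t ∈ Icc (0 : ℝ) T,
      Integrable (fun v => v) (f t) ∧ (∫ v, v ∂(f t)) = ∫ v, v ∂fin

/-- `μ` is a single Dirac measure `M • δ_V` with `M, V ∈ (0,∞)`. -/
def IsSingleDirac (μ : Measure ℝ) : Prop :=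
  ∃ M V : ℝ, 0 < M ∧ 0 < V ∧ μ = ENNReal.ofReal M • Measure.dirac V

/-- The kernel, cut off to the open positive quadrant. -/
def KtOf (K : ℝ → ℝ → ℝ) : ℝ × ℝ → ℝ :=
  (Ioi (0:ℝ) ×ˢ Ioi (0:ℝ)).indicator (fun p => K p.1 p.2)

/-- The coagulation increment. -/
def Dl (φ : ℝ → ℝ) (p : ℝ × ℝ) : ℝ := φ (p.1 + p.2) - φ p.1 - φ p.2

structure Setup (Kt : ℝ × ℝ → ℝ) (γ T c C : ℝ) (f : ℝ → Measure ℝ) (fin : Measure ℝ) : Prop where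
  Kmeas : Measurable Kt
  Knn : ∀ p, 0 ≤ Kt p
  Kle : ∀ p, Kt p ≤ c * (|1 + p.1 ^ γ| * |1 + p.2 ^ γ|)
  c_pos : 0 < c
  C_pos : 0 < C
  finite : ∀ t ∈ Icc (0:ℝ) T, IsFiniteMeasure (f t)
  aepos : ∀ t ∈ Icc (0:ℝ) T, ∀ᵐ v ∂(f t), 0 < v
  time_cont : ∀ φ : ℝ → ℝ, Continuous φ → (∃ M : ℝ, ∀ v, |φ v| ≤ M) →
      ContinuousOn (fun t => ∫ v, φ v ∂(f t)) (Icc (0 : ℝ) T)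
  mom_int : ∀ t ∈ Icc (0:ℝ) T, Integrable (fun v => |1 + v ^ γ|) (f t)
  mom_le : ∀ t ∈ Icc (0:ℝ) T, ∫ v, |1 + v ^ γ| ∂(f t) ≤ C
  mass_le : ∀ t ∈ Icc (0:ℝ) T, (f t).real univ ≤ C
  weak : ∀ φ : ℝ → ℝ, Continuous φ → HasCompactSupport φ →
      tsupport φ ⊆ Ioi 0 → ∀ t ∈ Icc (0 : ℝ) T,
      (∫ v, φ v ∂(f t)) - (∫ v, φ v ∂fin) =
        (1 / 2) * ∫ s in (0 : ℝ)..t, ∫ p, Kt p * Dl φ p ∂((f s).prod (f s))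

theorem KtOf_eq {K : ℝ → ℝ → ℝ} {p : ℝ × ℝ} (h1 : 0 < p.1) (h2 : 0 < p.2) :
    KtOf K p = K p.1 p.2 := by
  unfold KtOf
  rw [indicator_of_mem]
  exact ⟨h1, h2⟩

section kern
variable {K h : ℝ → ℝ → ℝ} {g : ℝ → ℝ} {γ H H₀ H₁ G₀ G₁ k : ℝ}

theorem frac_mem {v w : ℝ} (hv : 0 < v) (hw : 0 < w) : v / (v + w) ∈ Icc (0:ℝ) 1 := by
  constructor
  · positivity
  · rw [div_le_one (by positivity)]; linarith

theorem KtOf_meas (hK : KernelAssumptionA K h g γ H H₀ H₁ G₀ G₁ k) : Measurable (KtOf K) := by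
  have hcont : ContinuousOn (fun p : ℝ × ℝ => K p.1 p.2) (Ioi (0:ℝ) ×ˢ Ioi (0:ℝ)) := by
    have h1 : ContinuousOn (fun p : ℝ × ℝ => h p.1 p.2 * g (p.1 / (p.1 + p.2)))
        (Ioi (0:ℝ) ×ˢ Ioi (0:ℝ)) := by
      apply ContinuousOn.mul
      · exact hK.h_cont.mono (prod_mono Ioi_subset_Ici_self Ioi_subset_Ici_self)
      · refine hK.g_cont.comp (t := Icc 0 1) ?_ ?_
        · apply ContinuousOn.div (by fun_prop) (by fun_prop)
          rintro ⟨a, b⟩ ⟨ha, hb⟩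
          simp only [mem_Ioi] at *
          positivity
        · rintro ⟨a, b⟩ ⟨ha, hb⟩
          exact frac_mem ha hb
    refine h1.congr ?_
    rintro ⟨a, b⟩ ⟨ha, hb⟩
    simp only [mem_Ioi] at *
    exact hK.K_eq a b ha.le hb.le (by positivity)
  unfold KtOf
  have hms : MeasurableSet (Ioi (0:ℝ) ×ˢ Ioi (0:ℝ)) := measurableSet_Ioi.prod measurableSet_Ioi
  classical
  rw [← piecewise_eq_indicator]
  exact hcont.measurable_piecewise continuousOn_const hms

theorem KtOf_nn (hK : KernelAssumptionA K h g γ H H₀ H₁ G₀ G₁ k) (p) : 0 ≤ KtOf K p := by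
  unfold KtOf
  apply indicator_nonneg
  rintro ⟨a, b⟩ ⟨ha, hb⟩
  exact hK.K_nonneg a b (le_of_lt ha) (le_of_lt hb)

theorem KtOf_le (hK : KernelAssumptionA K h g γ H H₀ H₁ G₀ G₁ k) (p) :
    KtOf K p ≤ (H₁ * G₁) * (|1 + p.1 ^ γ| * |1 + p.2 ^ γ|) := by
  have := hK.H₁_pos
  have := hK.G₁_pos
  unfold KtOf
  apply indicator_apply_le'
  · obtain ⟨a, b⟩ := p
    rintro ⟨ha, hb⟩
    simp only [mem_Ioi] at *
    rw [hK.K_eq a b ha.le hb.le (by positivity)]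
    have e1 := hK.h_upper a b ha.le hb.le
    have e2 := hK.g_upper _ (frac_mem ha hb)
    have e3 : 0 ≤ g (a / (a + b)) := by
      refine le_trans ?_ (hK.g_lower _ (frac_mem ha hb))
      have := hK.G₀_pos
      positivity
    have ha' : 0 < a ^ γ := by positivity
    have hb' : 0 < b ^ γ := by positivity
    rw [abs_of_pos (by positivity), abs_of_pos (by positivity)]
    calc h a b * g (a / (a + b)) ≤ (H₁ * (a ^ γ + b ^ γ)) * g (a / (a + b)) := by gcongr
      _ ≤ (H₁ * (a ^ γ + b ^ γ)) * G₁ := by gcongr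
      _ ≤ H₁ * G₁ * ((1 + a ^ γ) * (1 + b ^ γ)) := by
        rw [mul_right_comm]
        gcongr
        nlinarith [mul_pos ha' hb']
  · intro _; positivity

theorem KtOf_pos (hK : KernelAssumptionA K h g γ H H₀ H₁ G₀ G₁ k) {a b : ℝ} (ha : 0 < a)
    (hb : 0 < b) (hab : a ≠ b) : 0 < KtOf K (a, b) := by
  rw [KtOf_eq (p := (a, b)) ha hb]
  simp only
  rw [hK.K_eq a b ha.le hb.le (by positivity)]
  apply mul_pos
  · obtain ⟨C, hC, hh⟩ := hK.h_posOn (a + b + 1 / a + 1 / b) (by positivity)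
    refine lt_of_lt_of_le hC (hh a ⟨?_, ?_⟩ b ⟨?_, ?_⟩)
    · rw [one_div_le (by positivity) ha]
      have : 0 < 1 / b := by positivity
      linarith
    · have : 0 < 1 / b := by positivity
      have : 0 < 1 / a := by positivity
      linarith
    · rw [one_div_le (by positivity) hb]
      have : 0 < 1 / a := by positivity
      linarith
    · have : 0 < 1 / b := by positivity
      have : 0 < 1 / a := by positivity
      linarith
  · refine lt_of_lt_of_le ?_ (hK.g_lower _ (frac_mem ha hb))
    have := hK.G₀_pos
    have h2 : 0 < |a / (a + b) - 1 / 2| := by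
      rw [abs_pos, sub_ne_zero]
      intro h3
      rw [div_eq_div_iff (by positivity) (by positivity)] at h3
      apply hab; linarith
    positivity

/-- Lower bound of the kernel for a large and a small particle. -/
theorem KtOf_lower (hK : KernelAssumptionA K h g γ H H₀ H₁ G₀ G₁ k) {a b : ℝ}
    (hb : 0 < b) (hab : 3 * b ≤ a) (haH : H < a) :
    H₀ * G₀ * (1 / 4 : ℝ) ^ k * a ^ γ ≤ KtOf K (a, b) := by
  have ha : 0 < a := by linarith
  rw [KtOf_eq (p := (a, b)) ha hb]
  simp only
  rw [hK.K_eq a b ha.le hb.le (by positivity)]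
  have e1 := hK.h_lower a b ha.le hb.le (by linarith)
  have e2 := hK.g_lower _ (frac_mem ha hb)
  have := hK.G₀_pos
  have := hK.H₀_pos
  have := hK.k_ge_one
  have hb' : 0 < b ^ γ := by positivity
  have h2 : 1 / 4 ≤ |a / (a + b) - 1 / 2| := by
    refine le_trans ?_ (le_abs_self _)
    rw [le_sub_iff_add_le, le_div_iff₀ (by positivity)]
    linarith
  have h3 : (1 / 4 : ℝ) ^ k ≤ |a / (a + b) - 1 / 2| ^ k :=
    Real.rpow_le_rpow (by norm_num) h2 (by linarith)
  calc H₀ * G₀ * (1 / 4 : ℝ) ^ k * a ^ γ = (H₀ * a ^ γ) * (G₀ * (1 / 4 : ℝ) ^ k) := by ring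
    _ ≤ h a b * g (a / (a + b)) := by
      apply mul_le_mul
      · refine le_trans ?_ e1
        gcongr; linarith
      · refine le_trans ?_ e2
        gcongr
      · positivity
      · refine le_trans ?_ e1
        positivity

theorem isFinite_of_mom {μ : Measure ℝ} (hp : ∀ᵐ v ∂μ, 0 < v)
    (hi : Integrable (fun v => 1 + v ^ γ) μ) : IsFiniteMeasure μ := by
  have : Integrable (fun _ : ℝ => (1:ℝ)) μ := by
    refine hi.mono' aestronglyMeasurable_const ?_
    filter_upwards [hp] with v hv
    have : 0 ≤ v ^ γ := by positivity
    simp; linarith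
  rw [integrable_const_iff] at this
  simpa using this

theorem Kt_integrable {Kt F : ℝ × ℝ → ℝ} {c B : ℝ} {μ : Measure ℝ} [IsFiniteMeasure μ]
    (Kmeas : Measurable Kt) (Knn : ∀ p, 0 ≤ Kt p)
    (Kle : ∀ p, Kt p ≤ c * (|1 + p.1 ^ γ| * |1 + p.2 ^ γ|))
    (hi : Integrable (fun v => |1 + v ^ γ|) μ)
    (hF : Measurable F) (hB : ∀ p, |F p| ≤ B) :
    Integrable (fun p => Kt p * F p) (μ.prod μ) := by
  have h1 : Integrable (fun p : ℝ × ℝ => B * (c * (|1 + p.1 ^ γ| * |1 + p.2 ^ γ|)))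
      (μ.prod μ) := ((hi.mul_prod hi).const_mul c).const_mul B
  refine h1.mono' (by fun_prop) ?_
  refine Eventually.of_forall fun p => ?_
  rw [Real.norm_eq_abs, abs_mul, abs_of_nonneg (Knn p), mul_comm]
  exact mul_le_mul (hB p) (Kle p) (Knn p) ((abs_nonneg _).trans (hB p))

theorem Dl_meas {φ : ℝ → ℝ} (h : Measurable φ) : Measurable (Dl φ) := by
  unfold Dl; fun_prop

theorem Dl_bdd {φ : ℝ → ℝ} {M : ℝ} (h : ∀ v, |φ v| ≤ M) (p : ℝ × ℝ) : |Dl φ p| ≤ 3 * M := by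
  unfold Dl
  have h1 := abs_le.1 (h (p.1 + p.2))
  have h2 := abs_le.1 (h p.1)
  have h3 := abs_le.1 (h p.2)
  rw [abs_le]; constructor <;> linarith

theorem setup_of (hK : KernelAssumptionA K h g γ H H₀ H₁ G₀ G₁ k) {T : ℝ}
    {f : ℝ → Measure ℝ} {fin : Measure ℝ} (hf : IsWeakSolution K γ T f fin) :
    ∃ C, Setup (KtOf K) γ T (H₁ * G₁) C f fin := by
  obtain ⟨C, hC⟩ := hf.moment_bound
  have haep : ∀ t ∈ Icc (0:ℝ) T, ∀ᵐ v ∂(f t), 0 < v := by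
    intro t ht
    rw [ae_iff]
    convert hf.conc t ht using 2
    ext v; simp
  have hfin : ∀ t ∈ Icc (0:ℝ) T, IsFiniteMeasure (f t) := fun t ht =>
    isFinite_of_mom (haep t ht) (hC t ht).1
  have hml : ∀ t ∈ Icc (0:ℝ) T, ∫ v, |1 + v ^ γ| ∂(f t) ≤ max C 1 := by
    intro t ht
    refine le_trans (le_of_eq ?_) ((hC t ht).2.trans (le_max_left _ _))
    apply integral_congr_ae
    filter_upwards [haep t ht] with v hv
    have : 0 ≤ v ^ γ := by positivity
    rw [abs_of_nonneg (by positivity)]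
  refine ⟨max C 1, KtOf_meas hK, KtOf_nn hK, KtOf_le hK, mul_pos hK.H₁_pos hK.G₁_pos, by positivity,
    hfin, haep, hf.time_cont, fun t ht => (hC t ht).1.abs, hml, ?_, ?_⟩
  · intro t ht
    have := hfin t ht
    refine le_trans ?_ (hml t ht)
    have : (f t).real univ = ∫ v, (1:ℝ) ∂(f t) := by simp
    rw [this]
    apply integral_mono_ae (integrable_const _) (hC t ht).1.abs
    filter_upwards [haep t ht] with v hv
    have : 0 ≤ v ^ γ := by positivity
    rw [abs_of_nonneg (by positivity)]
    linarith
  · intro φ hφ hcs hts t ht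
    rw [hf.weak_form φ hφ hcs hts t ht]
    congr 1
    apply intervalIntegral.integral_congr
    intro s hs
    rw [uIcc_of_le ht.1] at hs
    have hs' : s ∈ Icc 0 T := ⟨hs.1, hs.2.trans ht.2⟩
    have := hfin s hs'
    obtain ⟨M, hM⟩ := hφ.bounded_above_of_compact_support hcs
    have hint : Integrable (fun p => KtOf K p * Dl φ p) ((f s).prod (f s)) :=
      Kt_integrable (KtOf_meas hK) (KtOf_nn hK) (KtOf_le hK) (hC s hs').1.abs
        (Dl_meas hφ.measurable) (Dl_bdd hM)
    simp only
    rw [integral_prod _ hint]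
    apply integral_congr_ae
    filter_upwards [haep s hs'] with v hv
    apply integral_congr_ae
    filter_upwards [haep s hs'] with w hw
    rw [KtOf_eq (p := (v, w)) hv hw]
    rfl

end kern
section timeint
variable {Kt : ℝ × ℝ → ℝ} {γ T c C : ℝ} {f : ℝ → Measure ℝ} {fin : Measure ℝ}

open scoped Topology in
theorem Setup.meas_time (S : Setup Kt γ T c C f fin) {F : ℝ × ℝ → ℝ} (hF : Measurable F) :
    ∃ w : ℝ → ℝ, Measurable w ∧
      ∀ s ∈ Icc (0:ℝ) T, ∫ p, F p ∂((f s).prod (f s)) = w s := by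
  classical
  let κ : ℝ → Measure ℝ := fun s => if s ∈ Icc (0:ℝ) T then f s else 0
  have hκf : ∀ s, IsFiniteMeasure (κ s) := by
    intro s
    by_cases hs : s ∈ Icc (0:ℝ) T
    · simp only [κ, if_pos hs]; exact S.finite s hs
    · simp only [κ, if_neg hs]; infer_instance
  have hclosed : ∀ A : Set ℝ, IsClosed A → Measurable fun s => κ s A := by
    intro A hA
    obtain ⟨δ, -, hδ, hδ0⟩ := exists_seq_strictAnti_tendsto (0:ℝ)
    have hlim : Tendsto (fun n s => ∫⁻ ω, (thickenedIndicator (hδ n) A ω : ENNReal) ∂(κ s)) atTop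
        (𝓝 (fun s => κ s A)) := by
      rw [tendsto_pi_nhds]
      intro s
      exact tendsto_lintegral_thickenedIndicator_of_isClosed (κ s) hA hδ hδ0
    refine measurable_of_tendsto_metrizable (fun n => ?_) hlim
    have heq : (fun s => ∫⁻ ω, (thickenedIndicator (hδ n) A ω : ENNReal) ∂(κ s)) =
        fun s => ENNReal.ofReal ((Icc (0:ℝ) T).piecewise
          (fun s => ∫ ω, (thickenedIndicator (hδ n) A ω : ℝ) ∂(f s)) (fun _ => 0) s) := by
      funext s
      by_cases hs : s ∈ Icc (0:ℝ) T
      · have := S.finite s hs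
        rw [piecewise_eq_of_mem _ _ _ hs]
        simp only [κ, if_pos hs]
        rw [lintegral_coe_eq_integral]
        exact integrable_thickenedIndicator A (hδ n)
      · rw [piecewise_eq_of_notMem _ _ _ hs]
        simp only [κ, if_neg hs]
        simp
    rw [heq]
    apply ENNReal.measurable_ofReal.comp
    refine ContinuousOn.measurable_piecewise ?_ continuousOn_const measurableSet_Icc
    refine S.time_cont _ ?_ ⟨1, fun v => ?_⟩
    · exact NNReal.continuous_coe.comp (thickenedIndicator (hδ n) A).continuous
    · rw [abs_of_nonneg (NNReal.coe_nonneg _)]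
      exact_mod_cast thickenedIndicator_le_one (hδ n) A v
  have hκm : Measurable κ := by
    refine Measurable.measure_of_isPiSystem (borel_eq_generateFrom_Iic ℝ ▸ BorelSpace.measurable_eq)
      isPiSystem_Iic ?_ (hclosed _ isClosed_univ)
    rintro _ ⟨a, rfl⟩
    exact hclosed _ isClosed_Iic
  let κ' : ProbabilityTheory.Kernel ℝ ℝ := ⟨κ, hκm⟩
  have : ProbabilityTheory.IsFiniteKernel κ' := by
    refine ⟨ENNReal.ofReal C, ENNReal.ofReal_lt_top, fun s => ?_⟩
    change κ s univ ≤ _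
    by_cases hs : s ∈ Icc (0:ℝ) T
    · simp only [κ, if_pos hs]
      have := S.finite s hs
      rw [← ofReal_measureReal]
      exact ENNReal.ofReal_le_ofReal (S.mass_le s hs)
    · simp only [κ, if_neg hs]; simp
  refine ⟨fun s => ∫ p, F p ∂((ProbabilityTheory.Kernel.prod κ' κ') s), ?_, ?_⟩
  · exact (StronglyMeasurable.integral_kernel hF.stronglyMeasurable).measurable
  · intro s hs
    simp only
    rw [ProbabilityTheory.Kernel.prod_apply]
    have : κ' s = f s := by
      change κ s = f s
      simp only [κ, if_pos hs]
    rw [this]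

theorem Setup.integrable (S : Setup Kt γ T c C f fin) {F : ℝ × ℝ → ℝ} {B : ℝ}
    (hF : Measurable F) (hB : ∀ p, |F p| ≤ B) {s : ℝ} (hs : s ∈ Icc (0:ℝ) T) :
    Integrable (fun p => Kt p * F p) ((f s).prod (f s)) := by
  have := S.finite s hs
  exact Kt_integrable S.Kmeas S.Knn S.Kle (S.mom_int s hs) hF hB

theorem Setup.bound (S : Setup Kt γ T c C f fin) {F : ℝ × ℝ → ℝ} {B : ℝ}
    (hB : ∀ p, |F p| ≤ B) {s : ℝ} (hs : s ∈ Icc (0:ℝ) T) :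
    ‖∫ p, Kt p * F p ∂((f s).prod (f s))‖ ≤ B * (c * (C * C)) := by
  have := S.finite s hs
  have hi := S.mom_int s hs
  have hB0 : 0 ≤ B := (abs_nonneg _).trans (hB 0)
  have hc := S.c_pos
  have hC := S.C_pos
  have h1 : Integrable (fun p : ℝ × ℝ => B * (c * (|1 + p.1 ^ γ| * |1 + p.2 ^ γ|)))
      ((f s).prod (f s)) := ((hi.mul_prod hi).const_mul c).const_mul B
  refine (norm_integral_le_of_norm_le h1 (Eventually.of_forall fun p => ?_)).trans ?_
  · rw [Real.norm_eq_abs, abs_mul, abs_of_nonneg (S.Knn p), mul_comm]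
    exact mul_le_mul (hB p) (S.Kle p) (S.Knn p) hB0
  · rw [integral_const_mul, integral_const_mul,
      integral_prod_mul (fun v : ℝ => |1 + v ^ γ|) (fun v : ℝ => |1 + v ^ γ|)]
    have h2 := S.mom_le s hs
    have h3 : 0 ≤ ∫ v, |1 + v ^ γ| ∂(f s) := integral_nonneg fun v => abs_nonneg _
    gcongr

theorem Setup.intervalIntegrable (S : Setup Kt γ T c C f fin) {F : ℝ × ℝ → ℝ} {B : ℝ}
    (hF : Measurable F) (hB : ∀ p, |F p| ≤ B) {r t : ℝ} (hr : r ∈ Icc (0:ℝ) T)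
    (ht : t ∈ Icc (0:ℝ) T) :
    IntervalIntegrable (fun s => ∫ p, Kt p * F p ∂((f s).prod (f s))) volume r t := by
  obtain ⟨w, hw, hweq⟩ := S.meas_time (F := fun p => Kt p * F p) (S.Kmeas.mul hF)
  have hsub : uIoc r t ⊆ Icc 0 T := uIoc_subset_uIcc.trans
    (uIcc_subset_Icc hr ht)
  refine (intervalIntegrable_const (c := B * (c * (C * C)))).mono_fun' ?_ ?_
  · refine hw.aestronglyMeasurable.congr ?_
    rw [EventuallyEq, ae_restrict_iff' measurableSet_uIoc]
    exact Eventually.of_forall fun s hs => (hweq s (hsub hs)).symm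
  · rw [EventuallyLE, ae_restrict_iff' measurableSet_uIoc]
    exact Eventually.of_forall fun s hs => S.bound hB (hsub hs)

/-- cutoff -/
def cut (n : ℕ) (v : ℝ) : ℝ :=
  max 0 (min 1 ((n:ℝ) * v - 1)) * max 0 (min 1 ((n:ℝ) + 1 - v))

theorem cut_cont (n : ℕ) : Continuous (cut n) := by unfold cut; fun_prop

theorem cut_nonneg (n : ℕ) (v : ℝ) : 0 ≤ cut n v := by unfold cut; positivity

theorem cut_le (n : ℕ) (v : ℝ) : cut n v ≤ 1 := by
  unfold cut
  have h1 : max 0 (min 1 ((n:ℝ) * v - 1)) ≤ 1 := max_le zero_le_one (min_le_left _ _)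
  have h2 : max 0 (min 1 ((n:ℝ) + 1 - v)) ≤ 1 := max_le zero_le_one (min_le_left _ _)
  have h3 : 0 ≤ max 0 (min 1 ((n:ℝ) + 1 - v)) := le_max_left _ _
  nlinarith

theorem cut_supp (n : ℕ) : Function.support (cut n) ⊆ Icc (1 / ((n:ℝ) + 1)) ((n:ℝ) + 1) := by
  intro v hv
  by_contra hcon
  apply hv
  unfold cut
  rw [mem_Icc, not_and_or, not_le, not_le] at hcon
  have hn : (0:ℝ) ≤ n := by positivity
  rcases hcon with h | h
  · have : (n:ℝ) * v - 1 ≤ 0 := by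
      rw [lt_div_iff₀ (by positivity)] at h
      rcases le_or_gt 0 v with h0 | h0
      · nlinarith
      · nlinarith
    rw [max_eq_left ((min_le_right _ _).trans this)]; simp
  · have : (n:ℝ) + 1 - v ≤ 0 := by linarith
    rw [max_eq_left ((min_le_right _ _).trans this)]; simp

theorem cut_ev {v : ℝ} (hv : 0 < v) : ∀ᶠ n : ℕ in atTop, cut n v = 1 := by
  obtain ⟨N, hN⟩ := exists_nat_ge (2 / v + v)
  filter_upwards [eventually_ge_atTop N] with n hn
  have hn' : (N:ℝ) ≤ n := by exact_mod_cast hn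
  have h2 : 2 / v ≤ n := by linarith
  have h3 : v ≤ n := by have : 0 < 2 / v := by positivity
                        linarith
  rw [div_le_iff₀ hv] at h2
  unfold cut
  rw [min_eq_left (by linarith), min_eq_left (by linarith)]; simp

open scoped Topology in
theorem Setup.weak0 (S : Setup Kt γ T c C f fin) {ψ : ℝ → ℝ} (hψ : Continuous ψ) {M : ℝ}
    (hM : ∀ v, |ψ v| ≤ M) {t : ℝ} (ht : t ∈ Icc (0:ℝ) T) :
    (∫ v, ψ v ∂(f t)) - (∫ v, ψ v ∂(f 0)) =
        (1 / 2) * ∫ s in (0 : ℝ)..t, ∫ p, Kt p * Dl ψ p ∂((f s).prod (f s)) := by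
  have h0 : (0:ℝ) ∈ Icc (0:ℝ) T := ⟨le_rfl, ht.1.trans ht.2⟩
  let φ : ℕ → ℝ → ℝ := fun n v => ψ v * cut n v
  have hφc : ∀ n, Continuous (φ n) := fun n => hψ.mul (cut_cont n)
  have hφM : ∀ n v, |φ n v| ≤ M := by
    intro n v
    simp only [φ, abs_mul, abs_of_nonneg (cut_nonneg n v)]
    calc |ψ v| * cut n v ≤ |ψ v| * 1 := by gcongr; exact cut_le n v
      _ ≤ M := by rw [mul_one]; exact hM v
  have hφl : ∀ v, 0 < v → Tendsto (fun n => φ n v) atTop (𝓝 (ψ v)) := by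
    intro v hv
    refine tendsto_const_nhds.congr' ?_
    filter_upwards [cut_ev hv] with n hn
    simp [φ, hn]
  have hφs : ∀ n, tsupport (φ n) ⊆ Icc (1 / ((n:ℝ) + 1)) ((n:ℝ) + 1) := by
    intro n
    apply closure_minimal _ isClosed_Icc
    exact (Function.support_mul_subset_right _ _).trans (cut_supp n)
  have hw : ∀ n, (∫ v, φ n v ∂(f t)) - (∫ v, φ n v ∂(f 0)) =
        (1 / 2) * ∫ s in (0 : ℝ)..t, ∫ p, Kt p * Dl (φ n) p ∂((f s).prod (f s)) := by
    intro n
    have hcs : HasCompactSupport (φ n) :=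
      isCompact_Icc.of_isClosed_subset (isClosed_tsupport _) (hφs n)
    have hts : tsupport (φ n) ⊆ Ioi 0 := (hφs n).trans fun v hv => by
      have : 0 < 1 / ((n:ℝ) + 1) := by positivity
      exact lt_of_lt_of_le this hv.1
    have e1 := S.weak (φ n) (hφc n) hcs hts t ht
    have e2 := S.weak (φ n) (hφc n) hcs hts 0 h0
    simp only [intervalIntegral.integral_same, mul_zero] at e2
    linarith
  have hl : ∀ t ∈ Icc (0:ℝ) T, Tendsto (fun n => ∫ v, φ n v ∂(f t)) atTop (𝓝 (∫ v, ψ v ∂(f t))) := by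
    intro t ht
    have := S.finite t ht
    refine tendsto_integral_of_dominated_convergence (fun _ => M)
      (fun n => (hφc n).aestronglyMeasurable) (integrable_const M)
      (fun n => Eventually.of_forall (hφM n)) ?_
    filter_upwards [S.aepos t ht] with v hv using hφl v hv
  refine tendsto_nhds_unique ((hl t ht).sub (hl 0 h0)) ?_
  simp_rw [hw]
  refine Tendsto.const_mul _ ?_
  have hsub : ∀ s ∈ uIoc 0 t, s ∈ Icc 0 T := fun s hs =>
    (uIoc_subset_uIcc.trans (uIcc_subset_Icc h0 ht)) hs
  refine intervalIntegral.tendsto_integral_filter_of_dominated_convergence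
    (fun _ => 3 * M * (c * (C * C))) ?_ ?_ intervalIntegrable_const ?_
  · refine Eventually.of_forall fun n => ?_
    exact (S.intervalIntegrable (Dl_meas (hφc n).measurable) (Dl_bdd (hφM n)) h0 ht).def'.aestronglyMeasurable
  · refine Eventually.of_forall fun n => Eventually.of_forall fun s hs => ?_
    exact S.bound (Dl_bdd (hφM n)) (hsub s hs)
  · refine Eventually.of_forall fun s hs => ?_
    have hs' := hsub s hs
    have := S.finite s hs'
    have hi := S.mom_int s hs'
    refine tendsto_integral_of_dominated_convergence
      (fun p : ℝ × ℝ => 3 * M * (c * (|1 + p.1 ^ γ| * |1 + p.2 ^ γ|))) (fun n => ?_) ?_ (fun n => ?_) ?_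
    · exact (S.Kmeas.mul (Dl_meas (hφc n).measurable)).aestronglyMeasurable
    · exact ((hi.mul_prod hi).const_mul c).const_mul _
    · refine Eventually.of_forall fun p => ?_
      rw [Real.norm_eq_abs, abs_mul, abs_of_nonneg (S.Knn p), mul_comm]
      exact mul_le_mul (Dl_bdd (hφM n) p) (S.Kle p) (S.Knn p)
        ((abs_nonneg _).trans (Dl_bdd (hφM n) p))
    · have hp1 : ∀ᵐ p ∂((f s).prod (f s)), 0 < p.1 :=
        Measure.quasiMeasurePreserving_fst.ae (S.aepos s hs')
      have hp2 : ∀ᵐ p ∂((f s).prod (f s)), 0 < p.2 :=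
        Measure.quasiMeasurePreserving_snd.ae (S.aepos s hs')
      filter_upwards [hp1, hp2] with p h1 h2
      unfold Dl
      exact (((hφl _ (add_pos h1 h2)).sub (hφl _ h1)).sub (hφl _ h2)).const_mul _

theorem Setup.weak1 (S : Setup Kt γ T c C f fin) {ψ : ℝ → ℝ} (hψ : Continuous ψ) {M : ℝ}
    (hM : ∀ v, |ψ v| ≤ M) {r t : ℝ} (hr : r ∈ Icc (0:ℝ) T) (ht : t ∈ Icc (0:ℝ) T) :
    (∫ v, ψ v ∂(f t)) - (∫ v, ψ v ∂(f r)) =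
        (1 / 2) * ∫ s in r..t, ∫ p, Kt p * Dl ψ p ∂((f s).prod (f s)) := by
  have h0 : (0:ℝ) ∈ Icc (0:ℝ) T := ⟨le_rfl, ht.1.trans ht.2⟩
  have e1 := S.weak0 hψ hM ht
  have e2 := S.weak0 hψ hM hr
  have e3 := intervalIntegral.integral_add_adjacent_intervals
    (S.intervalIntegrable (Dl_meas hψ.measurable) (Dl_bdd hM) h0 hr)
    (S.intervalIntegrable (Dl_meas hψ.measurable) (Dl_bdd hM) hr ht)
  rw [← e3] at e1
  linarith

end timeint
theorem back_zero {u : ℝ → ℝ} {T C : ℝ} (hC : 0 < C) (hu : ContinuousOn u (Icc 0 T))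
    (hnn : ∀ t ∈ Icc (0:ℝ) T, 0 ≤ u t)
    (hineq : ∀ r ∈ Icc (0:ℝ) T, ∀ t ∈ Icc (0:ℝ) T, r ≤ t → u r ≤ u t + C * ∫ s in r..t, u s)
    {t : ℝ} (ht : t ∈ Icc (0:ℝ) T) (h0 : u t = 0) : ∀ r ∈ Icc (0:ℝ) t, u r = 0 := by
  have key : ∀ n : ℕ, ∀ r ∈ Icc (0:ℝ) t, t - r ≤ n * (1 / (2 * C)) → u r = 0 := by
    intro n
    induction n with
    | zero =>
      intro r hr h
      simp at h
      have : r = t := le_antisymm hr.2 h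
      rw [this, h0]
    | succ n ih =>
      intro r hr h
      set δ := 1 / (2 * C) with hδ
      have hδ0 : 0 < δ := by positivity
      set t' := min (r + δ) t with ht'
      have hrt' : r ≤ t' := le_min (by linarith) hr.2
      have ht't : t' ≤ t := min_le_right _ _
      have hz : u t' = 0 := by
        apply ih t' ⟨hr.1.trans hrt', ht't⟩
        rcases min_choice (r + δ) t with h1 | h1
        · rw [ht', h1]; push_cast at h; linarith
        · rw [ht', h1, sub_self]; positivity
      have hsub : Icc r t' ⊆ Icc 0 T := Icc_subset_Icc hr.1 (ht't.trans ht.2)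
      obtain ⟨s0, hs0, hmax⟩ := isCompact_Icc.exists_isMaxOn (nonempty_Icc.2 hrt') (hu.mono hsub)
      have h1 := hineq s0 (hsub hs0) t' (hsub (right_mem_Icc.2 hrt')) hs0.2
      have h2 : ∫ s in s0..t', u s ≤ ∫ s in s0..t', u s0 := by
        apply intervalIntegral.integral_mono_on hs0.2
        · apply ContinuousOn.intervalIntegrable
          rw [uIcc_of_le hs0.2]
          exact hu.mono ((Icc_subset_Icc_left hs0.1).trans hsub)
        · simp
        · intro s hs
          exact hmax (a := s) ⟨hs0.1.trans hs.1, hs.2⟩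
      rw [intervalIntegral.integral_const, smul_eq_mul] at h2
      have h3 : t' - s0 ≤ δ := by
        have := min_le_left (r + δ) t
        have := hs0.1
        linarith
      have h4 := hnn s0 (hsub hs0)
      have h5 : C * ∫ s in s0..t', u s ≤ u s0 / 2 := by
        calc C * ∫ s in s0..t', u s ≤ C * (δ * u s0) := by
              gcongr
              exact h2.trans (by gcongr)
          _ = u s0 / 2 := by rw [hδ]; field_simp
      have h6 : u r ≤ u s0 := hmax (a := r) (left_mem_Icc.2 hrt')
      have h7 := hnn r (hsub (left_mem_Icc.2 hrt'))
      linarith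
  intro r hr
  obtain ⟨n, hn⟩ := exists_nat_ge ((t - r) / (1 / (2 * C)))
  apply key n r hr
  rwa [div_le_iff₀ (by positivity)] at hn

/-- tent function -/
def tent (p ε : ℝ) (v : ℝ) : ℝ := max 0 (ε - |v - p|)

theorem tent_cont (p ε : ℝ) : Continuous (tent p ε) := by unfold tent; fun_prop

theorem tent_nonneg (p ε v : ℝ) : 0 ≤ tent p ε v := le_max_left _ _

theorem tent_le {p ε : ℝ} (hε : 0 < ε) (v : ℝ) : |tent p ε v| ≤ ε := by
  rw [abs_of_nonneg (tent_nonneg _ _ _)]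
  exact max_le hε.le (by linarith [abs_nonneg (v - p)])

theorem tent_pos {p ε v : ℝ} (h : |v - p| < ε) : 0 < tent p ε v := lt_max_of_lt_right (by linarith)

theorem tent_zero {p ε v : ℝ} (h : ε ≤ |v - p|) : tent p ε v = 0 := max_eq_left (by linarith)

theorem tent_supp (p ε : ℝ) : Function.support (tent p ε) = {v | |v - p| < ε} := by
  ext v
  simp only [Function.mem_support, mem_ofPred_eq]
  constructor
  · intro h; by_contra h'; exact h (tent_zero (not_lt.1 h'))
  · intro h; exact (tent_pos h).ne'

theorem tent_tsupp (p ε : ℝ) : tsupport (tent p ε) ⊆ Icc (p - ε) (p + ε) := by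
  apply closure_minimal _ isClosed_Icc
  rw [tent_supp]
  intro v hv
  have := abs_lt.1 (mem_ofPred_eq ▸ hv)
  constructor <;> linarith

theorem tent_int_pos {μ : Measure ℝ} [IsFiniteMeasure μ] {p ε : ℝ} (hε : 0 < ε) :
    0 < ∫ v, tent p ε v ∂μ ↔ 0 < μ {v | |v - p| < ε} := by
  rw [integral_pos_iff_support_of_nonneg (tent_nonneg p ε), tent_supp]
  refine (integrable_const ε).mono' (tent_cont p ε).aestronglyMeasurable ?_
  exact Eventually.of_forall (tent_le hε)

section pos
variable {Kt : ℝ × ℝ → ℝ} {γ T c C : ℝ} {f : ℝ → Measure ℝ} {fin : Measure ℝ}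

theorem Setup.tent_int (S : Setup Kt γ T c C f fin) {p ε : ℝ} (hε : 0 < ε) {s : ℝ}
    (hs : s ∈ Icc (0:ℝ) T) : Integrable (tent p ε) (f s) := by
  have := S.finite s hs
  refine (integrable_const ε).mono' (tent_cont p ε).aestronglyMeasurable ?_
  exact Eventually.of_forall (tent_le hε)

/-- one-sided loss estimate -/
theorem Setup.loss (S : Setup Kt γ T c C f fin) (hγ : 0 < γ) {p ε : ℝ} (hε : 0 < ε) (hεp : ε < p)
    {s : ℝ} (hs : s ∈ Icc (0:ℝ) T) :
    ∫ q, Kt q * (tent p ε q.1 + tent p ε q.2) ∂((f s).prod (f s)) ≤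
      2 * (c * (1 + (p + ε) ^ γ) * C) * ∫ v, tent p ε v ∂(f s) := by
  have := S.finite s hs
  have hi := S.mom_int s hs
  have hc := S.c_pos
  set R := (1 + (p + ε) ^ γ) with hR
  have hti := S.tent_int (p := p) hε hs
  have hpt : ∀ v, |1 + v ^ γ| * tent p ε v ≤ R * tent p ε v := by
    intro v
    by_cases hv : |v - p| < ε
    · have h1 := abs_lt.1 hv
      have hv0 : 0 < v := by linarith
      have : 0 ≤ v ^ γ := by positivity
      rw [abs_of_nonneg (by positivity)]
      have h2 : v ^ γ ≤ (p + ε) ^ γ := Real.rpow_le_rpow hv0.le (by linarith) hγ.le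
      have h3 : 1 + v ^ γ ≤ R := by rw [hR]; linarith
      exact mul_le_mul_of_nonneg_right h3 (tent_nonneg p ε v)
    · rw [tent_zero (not_lt.1 hv)]; simp
  have i1 : Integrable (fun q : ℝ × ℝ => c * R * (tent p ε q.1 * |1 + q.2 ^ γ|))
      ((f s).prod (f s)) := (hti.mul_prod hi).const_mul _
  have i2 : Integrable (fun q : ℝ × ℝ => c * R * (|1 + q.1 ^ γ| * tent p ε q.2))
      ((f s).prod (f s)) := (hi.mul_prod hti).const_mul _
  have h1 : ∫ q, Kt q * (tent p ε q.1 + tent p ε q.2) ∂((f s).prod (f s)) ≤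
      ∫ q, (c * R * (tent p ε q.1 * |1 + q.2 ^ γ|) + c * R * (|1 + q.1 ^ γ| * tent p ε q.2))
        ∂((f s).prod (f s)) := by
    apply integral_mono
    · apply S.integrable (B := 2 * ε) ?_ ?_ hs
      · exact ((tent_cont p ε).measurable.comp measurable_fst).add
          ((tent_cont p ε).measurable.comp measurable_snd)
      · intro q
        have a1 := tent_le (p := p) hε q.1
        have a2 := tent_le (p := p) hε q.2
        exact (abs_add_le _ _).trans (by linarith)
    · exact i1.add i2
    · intro q
      simp only
      have a1 := tent_nonneg p ε q.1
      have a2 := tent_nonneg p ε q.2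
      have b1 := hpt q.1
      have b2 := hpt q.2
      have k1 := S.Kle q
      calc Kt q * (tent p ε q.1 + tent p ε q.2)
          ≤ (c * (|1 + q.1 ^ γ| * |1 + q.2 ^ γ|)) * (tent p ε q.1 + tent p ε q.2) := by gcongr
        _ = c * ((|1 + q.1 ^ γ| * tent p ε q.1) * |1 + q.2 ^ γ|) +
            c * (|1 + q.1 ^ γ| * (|1 + q.2 ^ γ| * tent p ε q.2)) := by ring
        _ ≤ c * ((R * tent p ε q.1) * |1 + q.2 ^ γ|) +
            c * (|1 + q.1 ^ γ| * (R * tent p ε q.2)) := by gcongr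
        _ = _ := by ring
  refine h1.trans ?_
  rw [integral_add i1 i2, integral_const_mul, integral_const_mul,
    integral_prod_mul (tent p ε) (fun v : ℝ => |1 + v ^ γ|),
    integral_prod_mul (fun v : ℝ => |1 + v ^ γ|) (tent p ε)]
  have h2 := S.mom_le s hs
  have h3 : 0 ≤ ∫ v, tent p ε v ∂(f s) := integral_nonneg (tent_nonneg p ε)
  have hR0 : 0 < R := by
    have : 0 < p + ε := by linarith
    positivity
  have h4 : (∫ v, |1 + v ^ γ| ∂(f s)) * ∫ v, tent p ε v ∂(f s) ≤ C * ∫ v, tent p ε v ∂(f s) := by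
    gcongr
  have h5 : 0 < c * R := by positivity
  nlinarith

theorem Setup.split (S : Setup Kt γ T c C f fin) {p ε : ℝ} (hε : 0 < ε)
    {s : ℝ} (hs : s ∈ Icc (0:ℝ) T) :
    ∫ q, Kt q * Dl (tent p ε) q ∂((f s).prod (f s)) =
      ∫ q, Kt q * tent p ε (q.1 + q.2) ∂((f s).prod (f s)) -
      ∫ q, Kt q * (tent p ε q.1 + tent p ε q.2) ∂((f s).prod (f s)) := by
  rw [← integral_sub]
  · congr 1; funext q; unfold Dl; ring
  · apply S.integrable (B := ε) ?_ ?_ hs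
    · exact (tent_cont p ε).measurable.comp (measurable_fst.add measurable_snd)
    · intro q; exact tent_le hε _
  · apply S.integrable (B := 2 * ε) ?_ ?_ hs
    · exact ((tent_cont p ε).measurable.comp measurable_fst).add
          ((tent_cont p ε).measurable.comp measurable_snd)
    · intro q
      have a1 := tent_le (p := p) hε q.1
      have a2 := tent_le (p := p) hε q.2
      exact (abs_add_le _ _).trans (by linarith)

theorem Setup.gain_nonneg (S : Setup Kt γ T c C f fin) {p ε : ℝ} (s : ℝ) :
    0 ≤ ∫ q, Kt q * tent p ε (q.1 + q.2) ∂((f s).prod (f s)) :=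
  integral_nonneg fun q => mul_nonneg (S.Knn q) (tent_nonneg _ _ _)

theorem Setup.tent_back (S : Setup Kt γ T c C f fin) (hγ : 0 < γ) {p ε : ℝ} (hε : 0 < ε)
    (hεp : ε < p) {t : ℝ} (ht : t ∈ Icc (0:ℝ) T) (h0 : ∫ v, tent p ε v ∂(f t) = 0) :
    ∀ r ∈ Icc (0:ℝ) t, ∫ v, tent p ε v ∂(f r) = 0 := by
  have hcont := S.time_cont (tent p ε) (tent_cont p ε) ⟨ε, tent_le hε⟩
  have hpe : 0 < p + ε := by linarith
  have := S.c_pos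
  have := S.C_pos
  refine back_zero (u := fun t => ∫ v, tent p ε v ∂(f t)) (C := c * (1 + (p + ε) ^ γ) * C)
    (by positivity) hcont ?_ ?_ ht h0
  · intro t _; exact integral_nonneg (tent_nonneg p ε)
  · intro r hr t ht hrt
    have e := S.weak1 (tent_cont p ε) (tent_le hε) hr ht
    have hmono : ∫ s in r..t, (-(2 * (c * (1 + (p + ε) ^ γ) * C) * ∫ v, tent p ε v ∂(f s))) ≤
        ∫ s in r..t, ∫ q, Kt q * Dl (tent p ε) q ∂((f s).prod (f s)) := by
      apply intervalIntegral.integral_mono_on hrt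
      · apply ContinuousOn.intervalIntegrable
        rw [uIcc_of_le hrt]
        exact ((continuousOn_const.mul hcont).neg).mono (Icc_subset_Icc hr.1 ht.2)
      · exact S.intervalIntegrable (Dl_meas (tent_cont p ε).measurable) (Dl_bdd (tent_le hε)) hr ht
      · intro s hs
        have hs' : s ∈ Icc 0 T := ⟨hr.1.trans hs.1, hs.2.trans ht.2⟩
        rw [S.split hε hs']
        have a1 := S.loss hγ hε hεp hs'
        have a2 := S.gain_nonneg (p := p) (ε := ε) s
        linarith
    rw [intervalIntegral.integral_neg, intervalIntegral.integral_const_mul] at hmono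
    linarith

/-- points of the support of all `f t`, `t > 0` -/
def InP (T : ℝ) (f : ℝ → Measure ℝ) (p : ℝ) : Prop :=
  0 < p ∧ ∀ t ∈ Ioc (0:ℝ) T, ∀ ε > 0, 0 < f t {v | |v - p| < ε}

theorem Setup.inP_of_small (S : Setup Kt γ T c C f fin) {p : ℝ} (hp : 0 < p)
    (h : ∀ t ∈ Ioc (0:ℝ) T, ∀ ε > 0, ε < p → ∫ v, tent p ε v ∂(f t) ≠ 0) : InP T f p := by
  refine ⟨hp, fun t ht ε hε => ?_⟩
  have := S.finite t ⟨ht.1.le, ht.2⟩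
  have h1 : 0 < min ε (p / 2) := by positivity
  have h2 := h t ht (min ε (p / 2)) h1 (lt_of_le_of_lt (min_le_right _ _) (by linarith))
  have h3 := lt_of_le_of_ne (integral_nonneg (μ := f t) (tent_nonneg p (min ε (p / 2)))) h2.symm
  rw [tent_int_pos h1] at h3
  refine h3.trans_le (measure_mono ?_)
  intro v hv
  simp only [mem_ofPred_eq] at hv ⊢
  exact lt_of_lt_of_le hv (min_le_left _ _)

theorem Setup.inP_init (S : Setup Kt γ T c C f fin) [IsFiniteMeasure fin] (hγ : 0 < γ)
    {p : ℝ} (hp : 0 < p)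
    (h : ∀ ε > 0, 0 < fin {v | |v - p| < ε}) : InP T f p := by
  apply S.inP_of_small hp
  intro t ht ε hε hεp h0
  have h1 := S.tent_back hγ hε hεp ⟨ht.1.le, ht.2⟩ h0 0 ⟨le_rfl, ht.1.le⟩
  have hcs : HasCompactSupport (tent p ε) :=
    isCompact_Icc.of_isClosed_subset (isClosed_tsupport _) (tent_tsupp p ε)
  have hts : tsupport (tent p ε) ⊆ Ioi 0 := (tent_tsupp p ε).trans fun v hv => by
    have := hv.1
    simp only [mem_Ioi]; linarith
  have h2 := S.weak (tent p ε) (tent_cont p ε) hcs hts 0 ⟨le_rfl, ht.1.le.trans ht.2⟩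
  rw [h1, intervalIntegral.integral_same] at h2
  have h3 := (tent_int_pos (μ := fin) (p := p) hε).2 (h ε hε)
  linarith

theorem Setup.inP_add (S : Setup Kt γ T c C f fin) (hγ : 0 < γ)
    (hKpos : ∀ a b : ℝ, 0 < a → 0 < b → a ≠ b → 0 < Kt (a, b))
    {p q : ℝ} (hpq : p ≠ q) (hp : InP T f p) (hq : InP T f q) : InP T f (p + q) := by
  have hp0 := hp.1
  have hq0 := hq.1
  apply S.inP_of_small (by linarith)
  intro t ht ε hε hεp h0
  have ht' : t ∈ Icc 0 T := ⟨ht.1.le, ht.2⟩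
  have h00 : (0:ℝ) ∈ Icc 0 T := ⟨le_rfl, ht.1.le.trans ht.2⟩
  have hz := S.tent_back hγ hε hεp ht' h0
  have e := S.weak1 (tent_cont (p + q) ε) (tent_le hε) h00 ht'
  rw [h0, hz 0 ⟨le_rfl, ht.1.le⟩] at e
  have e2 : ∫ s in (0:ℝ)..t, ∫ x, Kt x * Dl (tent (p + q) ε) x ∂((f s).prod (f s)) = 0 := by
    linarith
  have hpos : 0 < ∫ s in (0:ℝ)..t, ∫ x, Kt x * Dl (tent (p + q) ε) x ∂((f s).prod (f s)) := by
    apply intervalIntegral.intervalIntegral_pos_of_pos_on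
    · exact S.intervalIntegrable (Dl_meas (tent_cont _ ε).measurable) (Dl_bdd (tent_le hε)) h00 ht'
    · intro s hs
      have hs' : s ∈ Icc 0 T := ⟨hs.1.le, hs.2.le.trans ht.2⟩
      have := S.finite s hs'
      rw [S.split hε hs']
      have a1 := S.loss hγ hε hεp hs'
      rw [hz s ⟨hs.1.le, hs.2.le⟩, mul_zero] at a1
      have a2 : 0 < ∫ x, Kt x * tent (p + q) ε (x.1 + x.2) ∂((f s).prod (f s)) := by
        rw [integral_pos_iff_support_of_nonneg]
        · set η := min (ε / 2) (min (min p q) (|p - q| / 2)) with hη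
          have hη0 : 0 < η := by
            have : 0 < |p - q| := abs_pos.2 (sub_ne_zero.2 hpq)
            positivity
          have b1 : η ≤ ε / 2 := min_le_left _ _
          have b2 : η ≤ p := (min_le_right _ _).trans ((min_le_left _ _).trans (min_le_left _ _))
          have b3 : η ≤ q := (min_le_right _ _).trans ((min_le_left _ _).trans (min_le_right _ _))
          have b4 : η ≤ |p - q| / 2 := (min_le_right _ _).trans (min_le_right _ _)
          have hsub : {v | |v - p| < η} ×ˢ {v | |v - q| < η} ⊆
              Function.support fun x : ℝ × ℝ => Kt x * tent (p + q) ε (x.1 + x.2) := by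
            rintro ⟨a, b⟩ ⟨ha, hb⟩
            simp only [mem_ofPred_eq] at ha hb
            have ha' := abs_lt.1 ha
            have hb' := abs_lt.1 hb
            have hne : a ≠ b := by
              rintro rfl
              have : |p - q| < 2 * η := by
                rw [abs_lt]; constructor <;> linarith
              linarith
            have hk := hKpos a b (by linarith) (by linarith) hne
            have ht : 0 < tent (p + q) ε (a + b) := by
              apply tent_pos
              rw [abs_lt]; constructor <;> linarith
            exact (mul_pos hk ht).ne'
          refine lt_of_lt_of_le ?_ (measure_mono hsub)
          rw [Measure.prod_prod]
          exact ENNReal.mul_pos (hp.2 s ⟨hs.1, hs'.2⟩ η hη0).ne' (hq.2 s ⟨hs.1, hs'.2⟩ η hη0).ne'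
        · intro x; exact mul_nonneg (S.Knn x) (tent_nonneg _ _ _)
        · apply S.integrable (B := ε) ?_ ?_ hs'
          · exact (tent_cont _ ε).measurable.comp (measurable_fst.add measurable_snd)
          · intro q; exact tent_le hε _
      linarith
    · exact ht.1
  linarith

theorem Setup.tail_pos (S : Setup Kt γ T c C f fin) (hγ : 0 < γ)
    (hKpos : ∀ a b : ℝ, 0 < a → 0 < b → a ≠ b → 0 < Kt (a, b))
    {x y : ℝ} (hxy : x < y) (hx : InP T f x) (hy : InP T f y) {t : ℝ} (ht : t ∈ Ioc (0:ℝ) T)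
    (L : ℝ) : 0 < f t (Ici L) := by
  have hx0 := hx.1
  have hall : ∀ n : ℕ, InP T f (n * x + y) := by
    intro n
    induction n with
    | zero => simpa using hy
    | succ n ih =>
      have hn : (0:ℝ) ≤ n * x := by positivity
      have := S.inP_add hγ hKpos (p := x) (q := n * x + y) (by linarith) hx ih
      convert this using 1
      push_cast; ring
  obtain ⟨n, hn⟩ := exists_nat_ge ((L + 1) / x)
  rw [div_le_iff₀ hx0] at hn
  refine ((hall n).2 t ht 1 one_pos).trans_le (measure_mono ?_)
  intro v hv
  have := abs_lt.1 (mem_ofPred_eq ▸ hv)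
  have := hy.1
  simp only [mem_Ici]; linarith

end pos
theorem rpow_neg_diff {v w p : ℝ} (hv : 0 < v) (hw : 0 < w) (hp : 0 < p) :
    p * w * (v + w) ^ (-(p + 1)) ≤ v ^ (-p) - (v + w) ^ (-p) := by
  have hvw : 0 < v + w := by positivity
  set x := v / (v + w) with hx
  have hx0 : 0 < x := by positivity
  have h1 : 1 + p * (1 - x) ≤ x ^ (-p) := by
    rw [Real.rpow_def_of_pos hx0]
    have h2 := Real.log_le_sub_one_of_pos hx0
    have h3 := Real.add_one_le_exp (Real.log x * -p)
    nlinarith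
  have h4 : v ^ (-p) = (v + w) ^ (-p) * x ^ (-p) := by
    rw [← Real.mul_rpow hvw.le hx0.le, hx, mul_div_cancel₀ _ hvw.ne']
  have h5 : (v + w) ^ (-(p + 1)) = (v + w) ^ (-p) / (v + w) := by
    rw [neg_add, ← sub_eq_add_neg, Real.rpow_sub_one hvw.ne']
  have h6 : 1 - x = w / (v + w) := by rw [hx]; field_simp; ring
  have h7 : 0 < (v + w) ^ (-p) := by positivity
  rw [h4, h5]
  rw [h6] at h1
  calc p * w * ((v + w) ^ (-p) / (v + w)) = (v + w) ^ (-p) * (p * (w / (v + w))) := by ring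
    _ ≤ (v + w) ^ (-p) * (x ^ (-p) - 1) := by gcongr; linarith
    _ = _ := by ring

/-- exponential profile -/
def Ef (p lam L v : ℝ) : ℝ := Real.exp (1 - lam * (max v L) ^ (-p))

def rho (p lam L v : ℝ) : ℝ := min 1 (Ef p lam L v) - Ef p lam L L

section chi
variable {p lam L : ℝ}

theorem Ef_cont (hL : 0 < L) : Continuous (Ef p lam L) := by
  unfold Ef
  apply Real.continuous_exp.comp
  apply continuous_const.sub
  apply continuous_const.mul
  apply Continuous.rpow_const (by fun_prop)
  intro v
  left
  exact (lt_of_lt_of_le hL (le_max_right _ _)).ne'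

theorem Ef_mono (hL : 0 < L) (hp : 0 < p) (hl : 0 < lam) : Monotone (Ef p lam L) := by
  intro a b hab
  unfold Ef
  apply Real.exp_le_exp.2
  have h1 : 0 < max a L := lt_of_lt_of_le hL (le_max_right _ _)
  have h2 : (max b L) ^ (-p) ≤ (max a L) ^ (-p) :=
    Real.rpow_le_rpow_of_nonpos h1 (max_le_max_right _ hab) (by linarith)
  have := mul_le_mul_of_nonneg_left h2 hl.le
  linarith

theorem Ef_L_le (h1 : 1 ≤ lam * L ^ (-p)) : Ef p lam L L ≤ 1 := by
  unfold Ef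
  rw [max_self, Real.exp_le_one_iff]; linarith

theorem Ef_pos (v : ℝ) : 0 < Ef p lam L v := Real.exp_pos _

theorem rho_cont (hL : 0 < L) : Continuous (rho p lam L) := by
  unfold rho
  exact (continuous_const.min (Ef_cont hL)).sub continuous_const

theorem rho_mono (hL : 0 < L) (hp : 0 < p) (hl : 0 < lam) : Monotone (rho p lam L) := by
  intro a b hab
  unfold rho
  have := min_le_min_left 1 (Ef_mono hL hp hl hab)
  linarith

theorem rho_zero (h1 : 1 ≤ lam * L ^ (-p)) {v : ℝ} (hv : v ≤ L) : rho p lam L v = 0 := by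
  unfold rho
  have : Ef p lam L v = Ef p lam L L := by unfold Ef; rw [max_eq_right hv, max_self]
  rw [this, min_eq_right (Ef_L_le h1), sub_self]

theorem rho_nonneg (hL : 0 < L) (hp : 0 < p) (hl : 0 < lam) (h1 : 1 ≤ lam * L ^ (-p)) (v : ℝ) :
    0 ≤ rho p lam L v := by
  rcases le_total v L with h | h
  · rw [rho_zero h1 h]
  · rw [← rho_zero (p := p) h1 le_rfl]; exact rho_mono hL hp hl h

theorem rho_le (v : ℝ) : rho p lam L v ≤ 1 := by
  unfold rho
  have := min_le_left 1 (Ef p lam L v)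
  have := Ef_pos (p := p) (lam := lam) (L := L) L
  linarith

/-- bounded test function -/
def psi (p lam L v : ℝ) : ℝ := max v 0 * (1 - min 1 (Ef p lam L v))

theorem psi_cont (hL : 0 < L) : Continuous (psi p lam L) := by
  unfold psi
  exact (continuous_id.max continuous_const).mul
    (continuous_const.sub (continuous_const.min (Ef_cont hL)))

theorem psi_bdd (hp : 0 < p) (hl : 0 < lam) : ∃ M, ∀ v, |psi p lam L v| ≤ M := by
  refine ⟨lam ^ (1 / p), fun v => ?_⟩
  have hE := Ef_pos (p := p) (lam := lam) (L := L) v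
  have hmin : 0 < min 1 (Ef p lam L v) := lt_min one_pos hE
  have hmin1 := min_le_left 1 (Ef p lam L v)
  have hm : 0 ≤ max v 0 := le_max_right _ _
  have hV : 0 < lam ^ (1 / p) := by positivity
  unfold psi
  rw [abs_of_nonneg (mul_nonneg hm (by linarith))]
  rcases le_total v (lam ^ (1 / p)) with h | h
  · calc max v 0 * (1 - min 1 (Ef p lam L v)) ≤ max v 0 * 1 := by gcongr; linarith
      _ ≤ lam ^ (1 / p) := by rw [mul_one]; exact max_le h hV.le
  · have : 1 ≤ Ef p lam L v := by
      unfold Ef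
      rw [Real.one_le_exp_iff]
      have h2 : (max v L) ^ (-p) ≤ (lam ^ (1 / p)) ^ (-p) :=
        Real.rpow_le_rpow_of_nonpos hV (h.trans (le_max_left _ _)) (by linarith)
      have h3 : (lam ^ (1 / p)) ^ (-p) = lam⁻¹ := by
        rw [← Real.rpow_mul hl.le]
        have : 1 / p * -p = -1 := by field_simp
        rw [this, Real.rpow_neg_one]
      rw [h3] at h2
      have := mul_le_mul_of_nonneg_left h2 hl.le
      rw [mul_inv_cancel₀ hl.ne'] at this
      linarith
    rw [min_eq_left this, sub_self, mul_zero]; exact hV.le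

theorem chi_eq {v : ℝ} (hv : 0 < v) :
    v * rho p lam L v = (1 - Ef p lam L L) * v - psi p lam L v := by
  unfold rho psi
  rw [max_eq_left hv.le]; ring

theorem Dl_psi {v w : ℝ} (hv : 0 < v) (hw : 0 < w) :
    - Dl (psi p lam L) (v, w) = (v + w) * rho p lam L (v + w) - v * rho p lam L v
      - w * rho p lam L w := by
  rw [chi_eq (add_pos hv hw), chi_eq hv, chi_eq hw]
  unfold Dl; simp only; ring

theorem Dl_psi_nonneg (hL : 0 < L) (hp : 0 < p) (hl : 0 < lam) {v w : ℝ}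
    (hv : 0 < v) (hw : 0 < w) : 0 ≤ - Dl (psi p lam L) (v, w) := by
  rw [Dl_psi hv hw]
  have h1 := rho_mono (p := p) hL hp hl (show v ≤ v + w by linarith)
  have h2 := rho_mono (p := p) hL hp hl (show w ≤ v + w by linarith)
  nlinarith [mul_le_mul_of_nonneg_left h1 hv.le, mul_le_mul_of_nonneg_left h2 hw.le]

theorem chi_gain (hL : 0 < L) (hp : 0 < p) (hl : 0 < lam) (h1 : 1 ≤ lam * L ^ (-p)) {v w : ℝ}
    (hv : L ≤ v) (hw : 0 < w) (hwv : w ≤ v) :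
    min ((2:ℝ) ^ (-p)) (p * 2 ^ (-(p + 1))) * lam * w * (v * rho p lam L v) ≤
      v ^ (p + 1) * ((v + w) * rho p lam L (v + w) - v * rho p lam L v) := by
  have hv0 : 0 < v := lt_of_lt_of_le hL hv
  have hr := rho_nonneg hL hp hl h1 v
  have hm := rho_mono (p := p) hL hp hl (show v ≤ v + w by linarith)
  have hvp : v ^ (p + 1) = v ^ p * v := Real.rpow_add_one hv0.ne' p
  have hvp0 : 0 < v ^ p := by positivity
  rcases le_or_gt (lam * 2 ^ (-p)) (v ^ p) with hc | hc
  · calc min ((2:ℝ) ^ (-p)) (p * 2 ^ (-(p + 1))) * lam * w * (v * rho p lam L v)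
        ≤ (2:ℝ) ^ (-p) * lam * w * (v * rho p lam L v) := by gcongr; exact min_le_left _ _
      _ = (lam * (2:ℝ) ^ (-p)) * (w * (v * rho p lam L v)) := by ring
      _ ≤ v ^ p * (w * (v * rho p lam L v)) := by gcongr
      _ = v ^ (p + 1) * (w * rho p lam L v) := by rw [hvp]; ring
      _ ≤ _ := by
        gcongr
        nlinarith [mul_le_mul_of_nonneg_left hm (by linarith : 0 ≤ v + w)]
  · -- both values are below the saturation
    have h2v : ∀ z, v ≤ z → z ≤ 2 * v → Ef p lam L z = Real.exp (1 - lam * z ^ (-p)) ∧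
        Ef p lam L z ≤ 1 := by
      intro z hz1 hz2
      have hz0 : 0 < z := by linarith
      have e1 : Ef p lam L z = Real.exp (1 - lam * z ^ (-p)) := by
        unfold Ef; rw [max_eq_left (hv.trans hz1)]
      refine ⟨e1, ?_⟩
      rw [e1, Real.exp_le_one_iff]
      have e2 : (2 * v) ^ (-p) ≤ z ^ (-p) :=
        Real.rpow_le_rpow_of_nonpos hz0 hz2 (by linarith)
      have e3 : (2 * v) ^ (-p) = 2 ^ (-p) * (v ^ p)⁻¹ := by
        rw [Real.mul_rpow (by norm_num) hv0.le, Real.rpow_neg hv0.le]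
      have e4 : 1 ≤ lam * (2 * v) ^ (-p) := by
        rw [e3, ← mul_assoc, ← div_eq_mul_inv, le_div_iff₀ hvp0]; linarith
      have := mul_le_mul_of_nonneg_left e2 hl.le
      linarith
    obtain ⟨a1, a2⟩ := h2v v le_rfl (by linarith)
    obtain ⟨b1, b2⟩ := h2v (v + w) (by linarith) (by linarith)
    have hd : rho p lam L (v + w) - rho p lam L v =
        Ef p lam L (v + w) - Ef p lam L v := by
      unfold rho; rw [min_eq_right a2, min_eq_right b2]; ring
    have hrE : rho p lam L v ≤ Ef p lam L v := by
      unfold rho; rw [min_eq_right a2]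
      have := Ef_pos (p := p) (lam := lam) (L := L) L
      linarith
    set D := v ^ (-p) - (v + w) ^ (-p) with hD
    have hDlow : p * w * (v + w) ^ (-(p + 1)) ≤ D := rpow_neg_diff hv0 hw hp
    have hD0 : 0 ≤ D := le_trans (by positivity) hDlow
    have hE : Ef p lam L v * (lam * D) ≤ Ef p lam L (v + w) - Ef p lam L v := by
      have : Ef p lam L (v + w) = Ef p lam L v * Real.exp (lam * D) := by
        rw [a1, b1, ← Real.exp_add]; congr 1; rw [hD]; ring
      rw [this]
      have h3 := Real.add_one_le_exp (lam * D)
      have h4 := Ef_pos (p := p) (lam := lam) (L := L) v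
      nlinarith
    have h5 : (2:ℝ) ^ (-(p + 1)) ≤ v ^ (p + 1) * (v + w) ^ (-(p + 1)) := by
      have h6 : (2 * v) ^ (-(p + 1)) ≤ (v + w) ^ (-(p + 1)) :=
        Real.rpow_le_rpow_of_nonpos (by positivity) (by linarith) (by linarith)
      have h7 : (2:ℝ) ^ (-(p + 1)) = v ^ (p + 1) * (2 * v) ^ (-(p + 1)) := by
        rw [Real.mul_rpow (by norm_num) hv0.le, Real.rpow_neg hv0.le (p + 1)]
        field_simp
      rw [h7]; gcongr
    have hrm : rho p lam L v * (lam * D) ≤ rho p lam L (v + w) - rho p lam L v := by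
      rw [hd]
      refine le_trans ?_ hE
      gcongr
    calc min ((2:ℝ) ^ (-p)) (p * 2 ^ (-(p + 1))) * lam * w * (v * rho p lam L v)
        ≤ (p * 2 ^ (-(p + 1))) * lam * w * (v * rho p lam L v) := by gcongr; exact min_le_right _ _
      _ ≤ (p * (v ^ (p + 1) * (v + w) ^ (-(p + 1)))) * lam * w * (v * rho p lam L v) := by gcongr
      _ = v ^ (p + 1) * (v * (rho p lam L v * (lam * (p * w * (v + w) ^ (-(p + 1)))))) := by ring
      _ ≤ v ^ (p + 1) * (v * (rho p lam L v * (lam * D))) := by gcongr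
      _ ≤ v ^ (p + 1) * (v * (rho p lam L (v + w) - rho p lam L v)) := by gcongr
      _ ≤ _ := by
        gcongr
        nlinarith [mul_nonneg hw.le (hr.trans hm)]

end chi
section final
variable {Kt : ℝ × ℝ → ℝ} {γ T c C : ℝ} {f : ℝ → Measure ℝ} {fin : Measure ℝ}

/-- a uniform amount of mass stays in a bounded region -/
theorem Setup.exists_B (S : Setup Kt γ T c C f fin) (hγ : 1 < γ) {m : ℝ} (hm : 0 < m)
    (hmi : ∀ t ∈ Icc (0:ℝ) T, Integrable (fun v => v) (f t))
    (hmm : ∀ t ∈ Icc (0:ℝ) T, ∫ v, v ∂(f t) = m) :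
    ∃ B > 0, ∀ t ∈ Icc (0:ℝ) T, m / 2 ≤ ∫ v, (Iic B).indicator (fun v => v) v ∂(f t) := by
  have hC := S.C_pos
  have hlim : Tendsto (fun B : ℝ => B ^ (-(γ - 1))) atTop (nhds 0) :=
    tendsto_rpow_neg_atTop (by linarith)
  have hev := (hlim.eventually (gt_mem_nhds (show 0 < m / (2 * C) by positivity))).and
    (eventually_gt_atTop 0)
  obtain ⟨B, hB1, hB0⟩ := hev.exists
  refine ⟨B, hB0, fun t ht => ?_⟩
  have hi := S.mom_int t ht
  have h1 : ∫ v, (v - (Iic B).indicator (fun v => v) v) ∂(f t) ≤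
      ∫ v, B ^ (-(γ - 1)) * |1 + v ^ γ| ∂(f t) := by
    apply integral_mono_ae ((hmi t ht).sub ((hmi t ht).indicator measurableSet_Iic))
      (hi.const_mul _)
    filter_upwards [S.aepos t ht] with v hv
    change v - (Iic B).indicator (fun v => v) v ≤ B ^ (-(γ - 1)) * |1 + v ^ γ|
    have hvγ : 0 < v ^ γ := by positivity
    by_cases hvB : v ≤ B
    · rw [indicator_of_mem (by exact hvB), sub_self]; positivity
    · rw [indicator_of_notMem (by exact hvB), sub_zero]
      rw [not_le] at hvB
      rw [abs_of_pos (by positivity)]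
      have h2 : v ^ (-(γ - 1)) ≤ B ^ (-(γ - 1)) :=
        Real.rpow_le_rpow_of_nonpos hB0 hvB.le (by linarith)
      calc v = v ^ (-(γ - 1)) * v ^ γ := by
            rw [← Real.rpow_add hv]; ring_nf; rw [Real.rpow_one]
        _ ≤ B ^ (-(γ - 1)) * v ^ γ := by gcongr
        _ ≤ B ^ (-(γ - 1)) * (1 + v ^ γ) := by gcongr; linarith
  rw [integral_sub (hmi t ht) ((hmi t ht).indicator measurableSet_Iic), hmm t ht,
    integral_const_mul] at h1
  have h3 : B ^ (-(γ - 1)) * ∫ v, |1 + v ^ γ| ∂(f t) ≤ m / (2 * C) * C := by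
    have := S.mom_le t ht
    have h4 : 0 ≤ ∫ v, |1 + v ^ γ| ∂(f t) := integral_nonneg fun v => abs_nonneg _
    exact mul_le_mul hB1.le this h4 (by positivity)
  have h5 : m / (2 * C) * C = m / 2 := by field_simp
  linarith

theorem growth {X : ℝ → ℝ} {μ r t : ℝ} (hμ : 0 < μ) (hXc : ContinuousOn X (Icc r t))
    (hX : ∀ s ∈ Icc r t, 0 ≤ X s)
    (h : ∀ a ∈ Icc r t, ∀ b ∈ Icc r t, a ≤ b → μ * ∫ s in a..b, X s ≤ X b - X a)
    (j : ℕ) (hj : r + j * (1 / μ) ≤ t) : 2 ^ j * X r ≤ X (r + j * (1 / μ)) := by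
  have hμ' : 0 < 1 / μ := by positivity
  have hmono : ∀ a ∈ Icc r t, ∀ b ∈ Icc r t, a ≤ b → X a ≤ X b := by
    intro a ha b hb hab
    have h1 := h a ha b hb hab
    have h2 : 0 ≤ ∫ s in a..b, X s := intervalIntegral.integral_nonneg hab fun s hs =>
      hX s ⟨ha.1.trans hs.1, hs.2.trans hb.2⟩
    have := mul_nonneg hμ.le h2
    linarith
  induction j with
  | zero => simp
  | succ j ih =>
    push_cast at hj ⊢
    have hj' : r + j * (1 / μ) ≤ t := by linarith
    have ih := ih hj'
    set a := r + j * (1 / μ) with ha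
    have hab : r + (↑j + 1) * (1 / μ) = a + 1 / μ := by rw [ha]; ring
    rw [hab] at hj ⊢
    have hra : r ≤ a := by rw [ha]; have : (0:ℝ) ≤ j * (1 / μ) := by positivity
                           linarith
    have ham : a ∈ Icc r t := ⟨hra, hj'⟩
    have hbm : a + 1 / μ ∈ Icc r t := ⟨by linarith, hj⟩
    have h1 := h a ham _ hbm (by linarith)
    have h2 : ∫ s in a..(a + 1 / μ), X a ≤ ∫ s in a..(a + 1 / μ), X s := by
      apply intervalIntegral.integral_mono_on (by linarith) (by simp)
      · apply ContinuousOn.intervalIntegrable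
        rw [uIcc_of_le (by linarith)]
        exact hXc.mono (Icc_subset_Icc hra hj)
      · intro s hs
        exact hmono a ham s ⟨hra.trans hs.1, hs.2.trans hj⟩ hs.1
    rw [intervalIntegral.integral_const, smul_eq_mul] at h2
    have h3 : μ * ((a + 1 / μ - a) * X a) = X a := by field_simp; ring
    have h4 := mul_le_mul_of_nonneg_left h2 hμ.le
    rw [pow_succ]
    linarith

theorem Setup.chi_growth (S : Setup Kt γ T c C f fin) {p lam L B c₀ m : ℝ} (hγ : γ = p + 1)
    (hp : 0 < p) (hl : 0 < lam) (hL : 0 < L) (h1 : 1 ≤ lam * L ^ (-p)) (hBL : 3 * B ≤ L)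
    (hc₀ : 0 < c₀)
    (hKlow : ∀ v w : ℝ, 0 < w → w ≤ B → L ≤ v → c₀ * v ^ γ ≤ Kt (v, w))
    (hmi : ∀ t ∈ Icc (0:ℝ) T, Integrable (fun v => v) (f t))
    (hmm : ∀ t ∈ Icc (0:ℝ) T, ∫ v, v ∂(f t) = m)
    (hBm : ∀ t ∈ Icc (0:ℝ) T, m / 2 ≤ ∫ v, (Iic B).indicator (fun v => v) v ∂(f t)) :
    ContinuousOn (fun t => ∫ v, v * rho p lam L v ∂(f t)) (Icc 0 T) ∧
    (∀ t ∈ Icc (0:ℝ) T, Integrable (fun v => v * rho p lam L v) (f t)) ∧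
    (∀ r ∈ Icc (0:ℝ) T, ∀ t ∈ Icc (0:ℝ) T, r ≤ t →
      (c₀ * min ((2:ℝ) ^ (-p)) (p * 2 ^ (-(p + 1))) * m / 4 * lam) *
        ∫ s in r..t, (∫ v, v * rho p lam L v ∂(f s)) ≤
      (∫ v, v * rho p lam L v ∂(f t)) - ∫ v, v * rho p lam L v ∂(f r)) := by
  set c₃ := min ((2:ℝ) ^ (-p)) (p * 2 ^ (-(p + 1))) with hc₃
  have hc₃0 : 0 < c₃ := by positivity
  obtain ⟨M, hM⟩ := psi_bdd (p := p) (lam := lam) (L := L) hp hl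
  have hψc := psi_cont (p := p) (lam := lam) hL
  have hψi : ∀ t ∈ Icc (0:ℝ) T, Integrable (psi p lam L) (f t) := by
    intro t ht
    have := S.finite t ht
    exact (integrable_const M).mono' hψc.aestronglyMeasurable (Eventually.of_forall hM)
  have hcongr : ∀ t ∈ Icc (0:ℝ) T, (fun v => (1 - Ef p lam L L) * v - psi p lam L v) =ᵐ[f t]
      (fun v => v * rho p lam L v) := by
    intro t ht
    filter_upwards [S.aepos t ht] with v hv using (chi_eq hv).symm
  have hχi : ∀ t ∈ Icc (0:ℝ) T, Integrable (fun v => v * rho p lam L v) (f t) := fun t ht =>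
    (((hmi t ht).const_mul _).sub (hψi t ht)).congr (hcongr t ht)
  have hXeq : ∀ t ∈ Icc (0:ℝ) T, ∫ v, v * rho p lam L v ∂(f t) =
      (1 - Ef p lam L L) * m - ∫ v, psi p lam L v ∂(f t) := by
    intro t ht
    rw [← integral_congr_ae (hcongr t ht), integral_sub ((hmi t ht).const_mul _) (hψi t ht),
      integral_const_mul, hmm t ht]
  have hXc : ContinuousOn (fun t => ∫ v, v * rho p lam L v ∂(f t)) (Icc 0 T) :=
    (continuousOn_const.sub (S.time_cont _ hψc ⟨M, hM⟩)).congr hXeq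
  refine ⟨hXc, hχi, ?_⟩
  intro r hr t ht hrt
  have e := S.weak1 hψc hM hr ht
  rw [hXeq t ht, hXeq r hr]
  have key : ∀ s ∈ Icc (0:ℝ) T, ∫ q, Kt q * Dl (psi p lam L) q ∂((f s).prod (f s)) ≤
      -(c₀ * c₃ * m / 2 * lam) * ∫ v, v * rho p lam L v ∂(f s) := by
    intro s hs
    have := S.finite s hs
    have hii := (hmi s hs).indicator (measurableSet_Iic (a := B))
    have hX0 : 0 ≤ ∫ v, v * rho p lam L v ∂(f s) := by
      apply integral_nonneg_of_ae
      filter_upwards [S.aepos s hs] with v hv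
      exact mul_nonneg hv.le (rho_nonneg hL hp hl h1 v)
    have hmono : ∫ q, Kt q * Dl (psi p lam L) q ∂((f s).prod (f s)) ≤
        ∫ q, -(c₀ * c₃ * lam) * ((q.1 * rho p lam L q.1) * (Iic B).indicator (fun v => v) q.2)
          ∂((f s).prod (f s)) := by
      apply integral_mono_ae
      · exact S.integrable (Dl_meas hψc.measurable) (Dl_bdd hM) hs
      · exact ((hχi s hs).mul_prod hii).const_mul _
      · have hp1 : ∀ᵐ q ∂((f s).prod (f s)), 0 < q.1 :=
          Measure.quasiMeasurePreserving_fst.ae (S.aepos s hs)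
        have hp2 : ∀ᵐ q ∂((f s).prod (f s)), 0 < q.2 :=
          Measure.quasiMeasurePreserving_snd.ae (S.aepos s hs)
        filter_upwards [hp1, hp2] with q hv hw
        obtain ⟨v, w⟩ := q
        simp only at hv hw ⊢
        have hnn := Dl_psi_nonneg (p := p) hL hp hl hv hw
        have hk := S.Knn (v, w)
        have h0 : Kt (v, w) * Dl (psi p lam L) (v, w) ≤ 0 := by
          nlinarith [mul_nonneg hk hnn]
        by_cases hwB : w ≤ B
        · rw [indicator_of_mem (by exact hwB)]
          rcases le_or_gt L v with hLv | hLv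
          · have g1 := chi_gain hL hp hl h1 hLv hw (by linarith)
            have g2 := hKlow v w hw hwB hLv
            have g3 : rho p lam L w = 0 := rho_zero h1 (by linarith)
            have g4 := Dl_psi (p := p) (lam := lam) (L := L) hv hw
            rw [g3, mul_zero, sub_zero] at g4
            rw [← g4, ← hc₃, ← hγ] at g1
            have g5 := mul_le_mul_of_nonneg_right g2 hnn
            have g6 := mul_le_mul_of_nonneg_left g1 hc₀.le
            nlinarith
          · rw [rho_zero h1 hLv.le]; simpa using h0
        · rw [indicator_of_notMem (by exact hwB)]; simpa using h0
    refine hmono.trans ?_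
    rw [integral_const_mul,
      integral_prod_mul (fun v => v * rho p lam L v) ((Iic B).indicator (fun v => v))]
    have hb := hBm s hs
    have h5 := mul_le_mul_of_nonneg_left hb
      (mul_nonneg (by positivity : 0 ≤ c₀ * c₃ * lam) hX0)
    nlinarith
  have hint : ∫ s in r..t, ∫ q, Kt q * Dl (psi p lam L) q ∂((f s).prod (f s)) ≤
      ∫ s in r..t, -(c₀ * c₃ * m / 2 * lam) * ∫ v, v * rho p lam L v ∂(f s) := by
    apply intervalIntegral.integral_mono_on hrt
    · exact S.intervalIntegrable (Dl_meas hψc.measurable) (Dl_bdd hM) hr ht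
    · apply ContinuousOn.intervalIntegrable
      rw [uIcc_of_le hrt]
      exact (continuousOn_const.mul hXc).mono (Icc_subset_Icc hr.1 ht.2)
    · intro s hs
      exact key s ⟨hr.1.trans hs.1, hs.2.trans ht.2⟩
  rw [intervalIntegral.integral_const_mul] at hint
  linarith

set_option maxHeartbeats 3000000 in
theorem Setup.contra (S : Setup Kt γ T c C f fin) (hT : 0 < T) {H c₀ m : ℝ} (hγ : 1 < γ)
    (hc₀ : 0 < c₀) (hm : 0 < m)
    (hKlow : ∀ v w : ℝ, 0 < w → 3 * w ≤ v → H < v → c₀ * v ^ γ ≤ Kt (v, w))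
    (hmi : ∀ t ∈ Icc (0:ℝ) T, Integrable (fun v => v) (f t))
    (hmm : ∀ t ∈ Icc (0:ℝ) T, ∫ v, v ∂(f t) = m)
    (htail : ∀ L, 0 < f (T / 2) (Ici L)) : False := by
  obtain ⟨B, hB0, hBm⟩ := S.exists_B hγ hm hmi hmm
  set p := γ - 1 with hpdef
  have hp : 0 < p := by rw [hpdef]; linarith
  have hγp : γ = p + 1 := by rw [hpdef]; ring
  set L := max (3 * B) (|H| + 1) with hLdef
  have hL : 0 < L := lt_of_lt_of_le (by linarith) (le_max_left _ _)
  have hLB : 3 * B ≤ L := le_max_left _ _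
  have hLH : H < L := lt_of_lt_of_le (by linarith [le_abs_self H]) (le_max_right _ _)
  set c₃ := min ((2:ℝ) ^ (-p)) (p * 2 ^ (-(p + 1))) with hc₃
  have hc₃0 : 0 < c₃ := by positivity
  set b := c₀ * c₃ * m / 4 with hb
  have hb0 : 0 < b := by positivity
  set a := 2 / (b * T) with ha
  have ha0 : 0 < a := by positivity
  have hLp : 0 < L ^ (-p) := by positivity
  have hlim : Tendsto (fun x : ℝ => x ^ (-p)) atTop (nhds 0) := tendsto_rpow_neg_atTop hp
  obtain ⟨L₀, ⟨hL₀1, hL₀2⟩, hL₀0⟩ := (((hlim.eventually (gt_mem_nhds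
    (show 0 < 1 / (4 * a) by positivity))).and (hlim.eventually (gt_mem_nhds
    (show 0 < L ^ (-p) / 2 by positivity)))).and (eventually_ge_atTop L)).exists
  have hL₀pos : 0 < L₀ := lt_of_lt_of_le hL hL₀0
  have hT2 : T / 2 ∈ Icc 0 T := ⟨by linarith, by linarith⟩
  have hTT : T ∈ Icc 0 T := ⟨hT.le, le_rfl⟩
  have hfinm := S.finite _ hT2
  set F := (f (T / 2)).real (Ici L₀) with hF
  have hF0 : 0 < F := ENNReal.toReal_pos (htail L₀).ne' (measure_ne_top _ _)
  have hq0 : 0 < L₀ ^ (-p) := by positivity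
  obtain ⟨N, hN⟩ := exists_nat_ge (2 / (a * L₀ ^ (-p)))
  rw [div_le_iff₀ (by positivity)] at hN
  have main : ∀ j : ℕ, N ≤ j → (3 / 2 : ℝ) ^ j * (L₀ * F / 2) ≤ m := by
    intro j hj
    have hj' : (N:ℝ) ≤ j := by exact_mod_cast hj
    have hjx : 2 ≤ j * (a * L₀ ^ (-p)) := hN.trans (by gcongr)
    have hjpos : 0 < (j:ℝ) := by
      by_contra hcon
      have : (j:ℝ) = 0 := le_antisymm (not_lt.1 hcon) (by positivity)
      rw [this] at hjx; norm_num at hjx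
    set lam := a * j with hlam
    have hl : 0 < lam := by positivity
    have hlx : 2 ≤ lam * L₀ ^ (-p) := by rw [hlam]; linarith
    have hlL : 2 * (lam * L₀ ^ (-p)) ≤ lam * L ^ (-p) := by
      have := mul_le_mul_of_nonneg_left hL₀2.le hl.le
      linarith
    have h1 : 1 ≤ lam * L ^ (-p) := by linarith
    obtain ⟨hXc, hχi, hgr⟩ := S.chi_growth (c₀ := c₀) (B := B) hγp hp hl hL h1 hLB hc₀
      (fun v w hw hwB hLv => hKlow v w hw (by linarith) (by linarith)) hmi hmm hBm
    set X := fun t => ∫ v, v * rho p lam L v ∂(f t) with hX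
    have hμ : 0 < b * lam := by positivity
    have hsub : Icc (T / 2) T ⊆ Icc 0 T := Icc_subset_Icc_left (by linarith)
    have hend : T / 2 + j * (1 / (b * lam)) = T := by
      rw [hlam, ha]; field_simp; ring
    have hg := growth (X := X) (r := T / 2) (t := T) hμ (hXc.mono hsub)
      (fun s hs => by
        apply integral_nonneg_of_ae
        filter_upwards [S.aepos s (hsub hs)] with v hv
        exact mul_nonneg hv.le (rho_nonneg hL hp hl h1 v))
      (fun r hr t ht hrt => hgr r (hsub hr) t (hsub ht) hrt) j hend.le
    rw [hend] at hg
    have hup : X T ≤ m := by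
      rw [← hmm T hTT]
      apply integral_mono_ae (hχi T hTT) (hmi T hTT)
      filter_upwards [S.aepos T hTT] with v hv
      have := rho_le (p := p) (lam := lam) (L := L) v
      nlinarith
    -- lower bound at time T / 2
    set x := Real.exp (-(lam * L₀ ^ (-p))) with hx
    have hx0 : 0 < x := Real.exp_pos _
    have hE0 : Ef p lam L L₀ = Real.exp 1 * x := by
      unfold Ef; rw [max_eq_left hL₀0, hx, ← Real.exp_add]; rfl
    have hEL : Ef p lam L L ≤ x / 2 := by
      unfold Ef
      rw [max_self]
      have e1 : Real.exp (1 - lam * L ^ (-p)) ≤ Real.exp (-1 + -(lam * L₀ ^ (-p))) := by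
        apply Real.exp_le_exp.2; linarith
      rw [Real.exp_add, ← hx] at e1
      have e2 : Real.exp (-1) ≤ 1 / 2 := by
        rw [Real.exp_neg, inv_eq_one_div]
        apply one_div_le_one_div_of_le (by norm_num)
        have := Real.add_one_le_exp 1
        linarith
      nlinarith
    have hx1 : x ≤ 1 := by
      rw [hx, Real.exp_le_one_iff]; linarith
    have hrho : x / 2 ≤ rho p lam L L₀ := by
      unfold rho
      have e3 : x ≤ min 1 (Ef p lam L L₀) := by
        apply le_min hx1
        rw [hE0]
        have := Real.add_one_le_exp 1
        nlinarith
      linarith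
    have hxj : (3 / 4 : ℝ) ^ j ≤ x := by
      have e4 : Real.exp (-(1 / 4)) ^ j ≤ x := by
        rw [← Real.exp_nat_mul, hx]
        apply Real.exp_le_exp.2
        have e5 := mul_le_mul_of_nonneg_left hL₀1.le hl.le
        have e6 : lam * (1 / (4 * a)) = j * (1 / 4) := by rw [hlam]; field_simp
        linarith
      refine le_trans ?_ e4
      gcongr
      have := Real.add_one_le_exp (-(1 / 4))
      linarith
    have hlow : L₀ * rho p lam L L₀ * F ≤ X (T / 2) := by
      have e7 : ∫ v, (Ici L₀).indicator (fun _ => L₀ * rho p lam L L₀) v ∂(f (T / 2)) ≤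
          X (T / 2) := by
        apply integral_mono_ae ((integrable_const _).indicator measurableSet_Ici) (hχi _ hT2)
        filter_upwards [S.aepos _ hT2] with v hv
        have e9 := rho_nonneg hL hp hl h1 v
        by_cases hvL : L₀ ≤ v
        · rw [indicator_of_mem (by exact hvL)]
          have e8 := rho_mono (p := p) hL hp hl hvL
          exact mul_le_mul hvL e8 (rho_nonneg hL hp hl h1 L₀) hv.le
        · rw [indicator_of_notMem (by exact hvL)]; exact mul_nonneg hv.le e9
      rw [integral_indicator_const _ measurableSet_Ici, smul_eq_mul] at e7
      linarith
    calc (3 / 2 : ℝ) ^ j * (L₀ * F / 2) = 2 ^ j * (L₀ * ((3 / 4) ^ j / 2) * F) := by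
          have : (3 / 2 : ℝ) ^ j = 2 ^ j * (3 / 4) ^ j := by rw [← mul_pow]; norm_num
          rw [this]; ring
      _ ≤ 2 ^ j * (L₀ * rho p lam L L₀ * F) := by
          refine mul_le_mul_of_nonneg_left ?_ (by positivity)
          refine mul_le_mul_of_nonneg_right ?_ hF0.le
          refine mul_le_mul_of_nonneg_left ?_ hL₀pos.le
          linarith
      _ ≤ 2 ^ j * X (T / 2) := mul_le_mul_of_nonneg_left hlow (by positivity)
      _ ≤ X T := hg
      _ ≤ m := hup
  have hinf : Tendsto (fun j : ℕ => (3 / 2 : ℝ) ^ j * (L₀ * F / 2)) atTop atTop :=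
    (tendsto_pow_atTop_atTop_of_one_lt (by norm_num)).atTop_mul_const (by positivity)
  obtain ⟨j, hj1, hj2⟩ := ((hinf.eventually (eventually_gt_atTop m)).and
    (eventually_ge_atTop N)).exists
  exact absurd (main j hj2) (not_le.2 hj1)

/-- a finite measure on the positive half-line that is not a single Dirac has two support points -/
theorem two_points {μ : Measure ℝ} [IsFiniteMeasure μ] (h0 : μ (Iic 0) = 0) (hne : μ ≠ 0)
    (hnd : ¬ IsSingleDirac μ) :
    ∃ x y : ℝ, 0 < x ∧ x < y ∧ (∀ ε > 0, 0 < μ {v | |v - x| < ε}) ∧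
      (∀ ε > 0, 0 < μ {v | |v - y| < ε}) := by
  have hex : ∀ A : Set ℝ, 0 < μ (A ∩ Ioi 0) → ∃ x ∈ A, 0 < x ∧ ∀ ε > 0, 0 < μ {v | |v - x| < ε} := by
    intro A hA
    by_contra hcon
    push Not at hcon
    have : μ (A ∩ Ioi 0) = 0 := by
      apply measure_null_of_locally_null
      rintro x ⟨hxA, hx0⟩
      obtain ⟨ε, hε, hz⟩ := hcon x hxA hx0
      refine ⟨{v | |v - x| < ε}, ?_, le_antisymm hz bot_le⟩
      apply mem_nhdsWithin_of_mem_nhds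
      exact Metric.ball_mem_nhds x hε
    exact hA.ne' this
  have hpos : 0 < μ (univ ∩ Ioi 0) := by
    rw [univ_inter, pos_iff_ne_zero]
    intro hz
    apply hne
    rw [← Measure.measure_univ_eq_zero]
    rw [← Iic_union_Ioi (a := (0:ℝ))]
    exact measure_union_null h0 hz
  obtain ⟨x, -, hx0, hx⟩ := hex univ hpos
  have hpos2 : 0 < μ ({x}ᶜ ∩ Ioi 0) := by
    rw [pos_iff_ne_zero]
    intro hz
    apply hnd
    have hz' : μ {x}ᶜ = 0 := by
      refine measure_mono_null ?_ (measure_union_null h0 hz)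
      intro v hv
      rcases le_or_gt v 0 with h | h
      · exact Or.inl h
      · exact Or.inr ⟨hv, h⟩
    refine ⟨μ.real {x}, x, ?_, hx0, ?_⟩
    · refine ENNReal.toReal_pos ?_ (measure_ne_top _ _)
      intro hzz
      apply hne
      rw [← Measure.measure_univ_eq_zero, ← union_compl_self {x}]
      exact measure_union_null hzz hz'
    · rw [ofReal_measureReal]
      have hr : μ.restrict {x} = μ := by
        rw [Measure.restrict_eq_self_of_ae_mem]
        exact hz'
      rw [← Measure.restrict_singleton, hr]
  obtain ⟨y, hyx, hy0, hy⟩ := hex _ hpos2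
  rcases lt_or_gt_of_ne (show y ≠ x from hyx) with h | h
  · exact ⟨y, x, hy0, h, hy, hx⟩
  · exact ⟨x, y, hx0, h, hx, hy⟩

end final

/-- A mass-conserving weak solution on `[0,T]` exists if and only if
the initial datum is a single Dirac measure `M • δ_V` with `M, V ∈ (0,∞)`. -/
theorem mass_conserving_solution_iff_singleDirac
    (K h : ℝ → ℝ → ℝ) (g : ℝ → ℝ) (γ H H₀ H₁ G₀ G₁ k : ℝ)
    (hK : KernelAssumptionA K h g γ H H₀ H₁ G₀ G₁ k)
    (T : ℝ) (hT : 0 < T)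
    (fin : Measure ℝ) (hconc : fin (Iic 0) = 0) (hne : fin ≠ 0)
    (hγmom : Integrable (fun v => 1 + v ^ γ) fin)
    (hmass : Integrable (fun v => v) fin) :
    (∃ f : ℝ → Measure ℝ, IsWeakSolution K γ T f fin ∧ IsMassConserving T f fin) ↔
      IsSingleDirac fin := by

  constructor
  · rintro ⟨f, hf, hmi, hmc⟩
    by_contra hnd
    have hpos : ∀ᵐ v ∂fin, 0 < v := by
      rw [ae_iff]
      convert hconc using 2
      ext v; simp
    have := isFinite_of_mom hpos hγmom
    obtain ⟨C, S⟩ := setup_of hK hf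
    have hγ := hK.γ_gt_one
    obtain ⟨x, y, hx0, hxy, hx, hy⟩ := two_points hconc hne hnd
    have hm : 0 < ∫ v, v ∂fin := by
      rw [integral_pos_iff_support_of_nonneg_ae (hpos.mono fun v hv => hv.le) hmass]
      refine (hx x hx0).trans_le (measure_mono ?_)
      intro v hv hv0
      simp only [mem_ofPred_eq] at hv
      rw [show v = 0 from hv0, zero_sub, abs_neg, abs_of_pos hx0] at hv
      exact lt_irrefl _ hv
    have hc₀ : 0 < H₀ * G₀ * (1 / 4 : ℝ) ^ k := by
      have := hK.H₀_pos
      have := hK.G₀_pos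
      positivity
    refine S.contra hT hγ hc₀ hm (H := H)
      (fun v w hw hwv hH => KtOf_lower hK hw hwv hH)
      (fun t ht => (hmc t ht).1) (fun t ht => (hmc t ht).2) (fun L => ?_)
    have hγ0 : 0 < γ := by linarith
    exact S.tail_pos hγ0 (fun a b ha hb hab => KtOf_pos hK ha hb hab) hxy
      (S.inP_init hγ0 hx0 hx) (S.inP_init hγ0 (hx0.trans hxy) hy) ⟨by linarith, by linarith⟩ L
  · rintro ⟨M, V, hM, hV, rfl⟩
    have hKV : K V V = 0 := by
      rw [hK.K_eq V V hV.le hV.le (by positivity)]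
      have : V / (V + V) = 1 / 2 := by field_simp; norm_num
      rw [this, hK.g_half, mul_zero]
    refine ⟨fun _ => ENNReal.ofReal M • Measure.dirac V, ⟨fun _ _ => hconc, ?_, ?_, ?_⟩,
      hmass, fun t _ => ⟨hmass, rfl⟩⟩
    · intro φ _ _; exact continuousOn_const
    · exact ⟨_, fun t _ => ⟨hγmom, le_rfl⟩⟩
    · intro φ _ _ _ t _
      simp [integral_smul_measure, hKV]
end
end

section
/- Let K satisfy Assumption A, let T' > 0, and let f be a mass-conserving weak solution of the coagulation equation on [0,T'] with kernel K and initial datum f_in, with 0 < v₀ := ∫ v f_in(dv) < ∞. Then for every real m ≥ 2 and every T ∈ (0,T'), sup_{t∈[0,T]} ∫ v^m f(dv,t) < ∞. -/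
open MeasureTheory Set Filter

noncomputable section

/-! ### Measurability in time -/

/-- A weakly continuous family of finite measures is a measurable family. -/
lemma aux_measurable_family (μ : ℝ → Measure ℝ) [∀ s, IsFiniteMeasure (μ s)]
    (hcont : ∀ φ : ℝ → ℝ, Continuous φ → (∃ M : ℝ, ∀ v, |φ v| ≤ M) →
      Continuous (fun s => ∫ v, φ v ∂(μ s))) : Measurable μ := by
  have hclosed : ∀ F : Set ℝ, IsClosed F → Measurable (fun s => μ s F) := by
    intro F hF
    have hδ : ∀ n : ℕ, (0 : ℝ) < 1 / ((n : ℝ) + 1) := fun n => by positivity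
    have h1 : Measurable (fun s => (μ s).real F) := by
      refine measurable_of_tendsto_metrizable
        (f := fun (n : ℕ) s => ∫ ω, (thickenedIndicator (hδ n) F ω : ℝ) ∂(μ s)) ?_ ?_
      · intro n
        refine (hcont _ (by fun_prop) ⟨1, fun v => ?_⟩).measurable
        rw [abs_of_nonneg (NNReal.coe_nonneg _)]
        exact_mod_cast thickenedIndicator_le_one (hδ n) F v
      · rw [tendsto_pi_nhds]
        intro s
        exact tendsto_integral_thickenedIndicator_of_isClosed (μ s) hF hδ
          tendsto_one_div_add_atTop_nhds_zero_nat
    have h2 : (fun s => μ s F) = fun s => ENNReal.ofReal ((μ s).real F) := by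
      funext s
      rw [ofReal_measureReal]
    rw [h2]
    exact h1.ennreal_ofReal
  refine Measurable.measure_of_isPiSystem (S := {s | IsClosed s}) ?_ isPiSystem_isClosed ?_ ?_
  · rw [← borel_eq_generateFrom_isClosed]
    exact BorelSpace.measurable_eq
  · intro s hs
    exact hclosed s hs
  · exact hclosed _ isClosed_univ

lemma aux_meas_prod (μ : ℝ → Measure ℝ) [∀ s, IsFiniteMeasure (μ s)] (C : ℝ)
    (hC : ∀ s, (μ s).real univ ≤ C)
    (hcont : ∀ φ : ℝ → ℝ, Continuous φ → (∃ M : ℝ, ∀ v, |φ v| ≤ M) →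
      Continuous (fun s => ∫ v, φ v ∂(μ s)))
    (F : ℝ × ℝ → ℝ) (hF : StronglyMeasurable F) :
    StronglyMeasurable (fun s => ∫ p, F p ∂((μ s).prod (μ s))) := by
  let κ : ProbabilityTheory.Kernel ℝ ℝ := ⟨μ, aux_measurable_family μ hcont⟩
  have hκ : ProbabilityTheory.IsFiniteKernel κ := by
    refine ⟨ENNReal.ofReal C, ENNReal.ofReal_lt_top, fun s => ?_⟩
    change μ s univ ≤ _
    rw [← ofReal_measureReal]
    exact ENNReal.ofReal_le_ofReal (hC s)
  have h := hF.integral_kernel (κ := ProbabilityTheory.Kernel.prod κ κ)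
  simp only [ProbabilityTheory.Kernel.prod_apply] at h
  exact h

/-! ### The ramp -/

/-- A continuous ramp from `0` (on `v ≤ R`) to `1` (on `2R ≤ v`). -/
def ramp (R v : ℝ) : ℝ := max 0 (min 1 (v / R - 1))

lemma ramp_cont (R : ℝ) : Continuous (ramp R) := by unfold ramp; fun_prop

lemma ramp_nonneg (R v : ℝ) : 0 ≤ ramp R v := le_max_left _ _

lemma ramp_le_one (R v : ℝ) : ramp R v ≤ 1 := max_le zero_le_one (min_le_left _ _)

lemma ramp_mono {R : ℝ} (hR : 0 < R) {v w : ℝ} (h : v ≤ w) : ramp R v ≤ ramp R w := by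
  unfold ramp; gcongr

lemma ramp_zero {R : ℝ} (hR : 0 < R) {v : ℝ} (h : v ≤ R) : ramp R v = 0 := by
  unfold ramp
  apply max_eq_left
  refine (min_le_right _ _).trans ?_
  have : v / R ≤ 1 := (div_le_one hR).2 h
  linarith

lemma ramp_one {R : ℝ} (hR : 0 < R) {v : ℝ} (h : 2 * R ≤ v) : ramp R v = 1 := by
  unfold ramp
  have : 2 ≤ v / R := (le_div_iff₀ hR).2 h
  rw [min_eq_left (by linarith)]
  simp

/-- The test function `(v (1 - ramp) - ε)⁺`. -/
def tf (R ε v : ℝ) : ℝ := max (v * (1 - ramp R v) - ε) 0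

lemma tf_cont (R ε : ℝ) : Continuous (tf R ε) := by
  have := ramp_cont R
  unfold tf; fun_prop

lemma tf_zero {R ε : ℝ} (hR : 0 < R) (hε : 0 < ε) (v : ℝ) (hv : v ∉ Icc ε (2 * R)) :
    tf R ε v = 0 := by
  unfold tf
  apply max_eq_right
  rw [mem_Icc, not_and_or, not_le, not_le] at hv
  have h0 := ramp_nonneg R v
  have h1 := ramp_le_one R v
  rcases hv with hv | hv
  · rcases le_total v 0 with h | h
    · nlinarith
    · nlinarith
  · rw [ramp_one hR hv.le]; linarith

lemma tf_compact {R ε : ℝ} (hR : 0 < R) (hε : 0 < ε) : HasCompactSupport (tf R ε) :=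
  HasCompactSupport.intro isCompact_Icc (tf_zero hR hε)

lemma tf_tsupport {R ε : ℝ} (hR : 0 < R) (hε : 0 < ε) : tsupport (tf R ε) ⊆ Ioi 0 := by
  have : tsupport (tf R ε) ⊆ Icc ε (2 * R) := by
    refine closure_minimal ?_ isClosed_Icc
    intro v hv
    by_contra h
    exact hv (tf_zero hR hε v h)
  exact fun v hv => lt_of_lt_of_le hε (this hv).1

lemma tf_le {R ε v : ℝ} (hε : 0 < ε) (hv : 0 < v) : tf R ε v ≤ v * (1 - ramp R v) := by
  have h1 := ramp_le_one R v
  exact max_le (by linarith) (mul_nonneg hv.le (by linarith))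

lemma le_tf {R ε v : ℝ} : v * (1 - ramp R v) - ε ≤ tf R ε v := le_max_left _ _

lemma tf_nonneg {R ε v : ℝ} : 0 ≤ tf R ε v := le_max_right _ _

lemma tf_bdd {R ε : ℝ} (hR : 0 < R) (hε : 0 < ε) (v : ℝ) : |tf R ε v| ≤ 2 * R := by
  rw [abs_of_nonneg tf_nonneg]
  by_cases hv : v ∈ Icc ε (2 * R)
  · have hv0 : 0 < v := lt_of_lt_of_le hε hv.1
    refine (tf_le hε hv0).trans ?_
    have h0 := ramp_nonneg R v
    nlinarith [hv.2]
  · rw [tf_zero hR hε v hv]; linarith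

/-! ### Kernel facts -/

section kernel

variable {K h : ℝ → ℝ → ℝ} {g : ℝ → ℝ} {γ H H₀ H₁ G₀ G₁ k : ℝ}

lemma aux_frac {v v' : ℝ} (hv : 0 < v) (hv' : 0 < v') : v / (v + v') ∈ Icc (0 : ℝ) 1 :=
  ⟨by positivity, (div_le_one (by positivity)).2 (by linarith)⟩

lemma K_upper (hK : KernelAssumptionA K h g γ H H₀ H₁ G₀ G₁ k) {v v' : ℝ}
    (hv : 0 < v) (hv' : 0 < v') : K v v' ≤ H₁ * G₁ * (v ^ γ + v' ^ γ) := by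
  rw [hK.K_eq v v' hv.le hv'.le (by positivity)]
  have hx := aux_frac hv hv'
  have hg0 : 0 ≤ g (v / (v + v')) :=
    le_trans (mul_nonneg hK.G₀_pos.le (Real.rpow_nonneg (abs_nonneg _) _)) (hK.g_lower _ hx)
  have hh := hK.h_upper v v' hv.le hv'.le
  have hp : 0 ≤ H₁ * (v ^ γ + v' ^ γ) :=
    mul_nonneg hK.H₁_pos.le (by positivity)
  calc h v v' * g (v / (v + v')) ≤ H₁ * (v ^ γ + v' ^ γ) * g (v / (v + v')) :=
        mul_le_mul_of_nonneg_right hh hg0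
    _ ≤ H₁ * (v ^ γ + v' ^ γ) * G₁ := mul_le_mul_of_nonneg_left (hK.g_upper _ hx) hp
    _ = _ := by ring

lemma K_lower (hK : KernelAssumptionA K h g γ H H₀ H₁ G₀ G₁ k) {v v' R : ℝ}
    (hv : 0 < v) (hR : 0 < R) (hvR : 3 * v ≤ R) (hRv : R ≤ v') (hH : H ≤ R) :
    H₀ * (G₀ * (1 / 4) ^ k) * R ^ (γ - 1) * v' ≤ K v v' := by
  have hv' : 0 < v' := by linarith
  rw [hK.K_eq v v' hv.le hv'.le (by positivity)]
  have hx := aux_frac hv hv'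
  have hx4 : v / (v + v') ≤ 1 / 4 := by
    rw [div_le_iff₀ (by positivity)]; linarith
  have hg : G₀ * (1 / 4) ^ k ≤ g (v / (v + v')) := by
    refine le_trans ?_ (hK.g_lower _ hx)
    have hk := hK.k_ge_one
    refine mul_le_mul_of_nonneg_left ?_ hK.G₀_pos.le
    refine Real.rpow_le_rpow (by norm_num) ?_ (by linarith)
    rw [abs_of_nonpos (by linarith)]
    linarith
  have hgc : 0 ≤ G₀ * (1 / 4 : ℝ) ^ k := mul_nonneg hK.G₀_pos.le (by positivity)
  have hγ := hK.γ_gt_one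
  have hh : H₀ * (R ^ (γ - 1) * v') ≤ h v v' := by
    refine le_trans ?_ (hK.h_lower v v' hv.le hv'.le (by linarith))
    refine mul_le_mul_of_nonneg_left ?_ hK.H₀_pos.le
    have e : v' ^ γ = v' ^ (γ - 1) * v' := by
      rw [← Real.rpow_add_one hv'.ne']; simp
    have h1 : R ^ (γ - 1) ≤ v' ^ (γ - 1) := Real.rpow_le_rpow hR.le hRv (by linarith)
    have h2 : 0 ≤ v ^ γ := by positivity
    rw [e]
    nlinarith
  have hh0 : 0 ≤ H₀ * (R ^ (γ - 1) * v') := mul_nonneg hK.H₀_pos.le (by positivity)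
  calc _ = H₀ * (R ^ (γ - 1) * v') * (G₀ * (1 / 4) ^ k) := by ring
    _ ≤ h v v' * g (v / (v + v')) := mul_le_mul hh hg hgc (hh0.trans hh)

/-- The kernel cut to the open quadrant, measurable everywhere. -/
def Kt (K : ℝ → ℝ → ℝ) : ℝ × ℝ → ℝ := (Ioi 0 ×ˢ Ioi 0).indicator (fun p => K p.1 p.2)

lemma Kt_meas (hK : KernelAssumptionA K h g γ H H₀ H₁ G₀ G₁ k) : Measurable (Kt K) := by
  have hS : MeasurableSet (Ioi (0 : ℝ) ×ˢ Ioi (0 : ℝ)) := measurableSet_Ioi.prod measurableSet_Ioi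
  have hc : ContinuousOn (fun p : ℝ × ℝ => K p.1 p.2) (Ioi 0 ×ˢ Ioi 0) := by
    have h1 : ContinuousOn (fun p : ℝ × ℝ => h p.1 p.2 * g (p.1 / (p.1 + p.2)))
        (Ioi 0 ×ˢ Ioi 0) := by
      refine ContinuousOn.mul (hK.h_cont.mono ?_) ?_
      · exact prod_mono Ioi_subset_Ici_self Ioi_subset_Ici_self
      · refine hK.g_cont.comp ?_ ?_
        · refine ContinuousOn.div (by fun_prop) (by fun_prop) ?_
          rintro p ⟨hp1, hp2⟩
          exact (add_pos hp1 hp2).ne'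
        · rintro p ⟨hp1, hp2⟩
          exact aux_frac hp1 hp2
    refine h1.congr ?_
    rintro p ⟨hp1, hp2⟩
    exact hK.K_eq _ _ (le_of_lt hp1) (le_of_lt hp2) (add_pos hp1 hp2)
  unfold Kt
  rw [← piecewise_eq_indicator]
  classical
  convert hc.measurable_piecewise (continuousOn_const (c := (0 : ℝ))) hS
  rfl

lemma Kt_eq {p : ℝ × ℝ} (h1 : 0 < p.1) (h2 : 0 < p.2) : Kt K p = K p.1 p.2 :=
  indicator_of_mem (s := Ioi (0 : ℝ) ×ˢ Ioi (0 : ℝ)) ⟨h1, h2⟩ _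

end kernel

/-! ### Facts at a fixed time -/

section fixed

variable {K h : ℝ → ℝ → ℝ} {g : ℝ → ℝ} {γ H H₀ H₁ G₀ G₁ k : ℝ}

lemma ae_pos {μ : Measure ℝ} (h0 : μ (Iic 0) = 0) : ∀ᵐ v ∂μ, 0 < v := by
  rw [ae_iff]
  simp only [not_lt]
  exact h0

lemma ae_pos_prod {μ : Measure ℝ} [IsFiniteMeasure μ] (h0 : μ (Iic 0) = 0) :
    ∀ᵐ p ∂(μ.prod μ), 0 < p.1 ∧ 0 < p.2 := by
  have h1 : ∀ᵐ p ∂(μ.prod μ), 0 < p.1 :=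
    Measure.quasiMeasurePreserving_fst.ae (ae_pos h0)
  have h2 : ∀ᵐ p ∂(μ.prod μ), 0 < p.2 :=
    Measure.quasiMeasurePreserving_snd.ae (ae_pos h0)
  exact h1.and h2

/-- What is known about the solution at a fixed time. -/
structure Good (γ C v₀ : ℝ) (μ : Measure ℝ) : Prop where
  fin : IsFiniteMeasure μ
  conc : μ (Iic 0) = 0
  intγ : Integrable (fun v => v ^ γ) μ
  intγ_le : ∫ v, v ^ γ ∂μ ≤ C
  mass_le : μ.real univ ≤ C
  int1 : Integrable (fun v => v) μ
  int1_eq : ∫ v, v ∂μ = v₀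

lemma good_of {C v₀ : ℝ} {μ : Measure ℝ} (h0 : μ (Iic 0) = 0)
    (hi : Integrable (fun v => 1 + v ^ γ) μ) (hC : ∫ v, (1 + v ^ γ) ∂μ ≤ C)
    (h1 : Integrable (fun v => v) μ) (h2 : ∫ v, v ∂μ = v₀) : Good γ C v₀ μ := by
  have hp := ae_pos h0
  have hone : Integrable (fun _ : ℝ => (1 : ℝ)) μ := by
    refine hi.mono' (by fun_prop) ?_
    filter_upwards [hp] with v hv
    have : 0 ≤ v ^ γ := by positivity
    simpa using this
  have hfin : IsFiniteMeasure μ := by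
    have := (integrable_const_iff (μ := μ) (c := (1 : ℝ))).1 hone
    simpa [isFiniteMeasure_iff] using this
  have hg : Integrable (fun v => v ^ γ) μ := by
    refine (hi.sub hone).congr ?_
    filter_upwards with v
    simp
  have e : ∫ v, (1 + v ^ γ) ∂μ = μ.real univ + ∫ v, v ^ γ ∂μ := by
    rw [integral_add hone hg]; simp
  have n1 : 0 ≤ μ.real univ := measureReal_nonneg
  have n2 : 0 ≤ ∫ v, v ^ γ ∂μ := by
    refine integral_nonneg_of_ae ?_
    filter_upwards [hp] with v hv
    positivity
  exact ⟨hfin, h0, hg, by linarith, by linarith, h1, h2⟩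

variable {C v₀ : ℝ} {μ : Measure ℝ}

lemma Kt_int (hK : KernelAssumptionA K h g γ H H₀ H₁ G₀ G₁ k) (hμ : Good γ C v₀ μ) :
    Integrable (Kt K) (μ.prod μ) ∧ ∫ p, Kt K p ∂(μ.prod μ) ≤ H₁ * G₁ * (2 * (C * C)) := by
  have := hμ.fin
  have hp := ae_pos_prod hμ.conc
  have i1 : Integrable (fun p : ℝ × ℝ => p.1 ^ γ) (μ.prod μ) := hμ.intγ.comp_fst μ
  have i2 : Integrable (fun p : ℝ × ℝ => p.2 ^ γ) (μ.prod μ) := hμ.intγ.comp_snd μ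
  have i3 : Integrable (fun p : ℝ × ℝ => H₁ * G₁ * (p.1 ^ γ + p.2 ^ γ)) (μ.prod μ) :=
    (i1.add i2).const_mul _
  have hle : ∀ᵐ p ∂(μ.prod μ), Kt K p ≤ H₁ * G₁ * (p.1 ^ γ + p.2 ^ γ) := by
    filter_upwards [hp] with p hp
    rw [Kt_eq hp.1 hp.2]
    exact K_upper hK hp.1 hp.2
  have hI : Integrable (Kt K) (μ.prod μ) := by
    refine i3.mono' (Kt_meas hK).aestronglyMeasurable ?_
    filter_upwards [hp, hle] with p hp hle
    rw [Real.norm_of_nonneg]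
    · exact hle
    · rw [Kt_eq hp.1 hp.2]
      exact hK.K_nonneg _ _ hp.1.le hp.2.le
  refine ⟨hI, (integral_mono_ae hI i3 hle).trans ?_⟩
  have e1 : ∫ p : ℝ × ℝ, p.1 ^ γ ∂(μ.prod μ) = (∫ v, v ^ γ ∂μ) * μ.real univ := by
    have := integral_prod_mul (μ := μ) (ν := μ) (fun v : ℝ => v ^ γ) (fun _ : ℝ => (1 : ℝ))
    simpa using this
  have e2 : ∫ p : ℝ × ℝ, p.2 ^ γ ∂(μ.prod μ) = μ.real univ * (∫ v, v ^ γ ∂μ) := by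
    have := integral_prod_mul (μ := μ) (ν := μ) (fun _ : ℝ => (1 : ℝ)) (fun v : ℝ => v ^ γ)
    simpa using this
  rw [integral_const_mul, integral_add i1 i2, e1, e2]
  have n1 : 0 ≤ μ.real univ := measureReal_nonneg
  have n2 : 0 ≤ ∫ v, v ^ γ ∂μ := by
    refine integral_nonneg_of_ae ?_
    filter_upwards [ae_pos hμ.conc] with v hv
    positivity
  refine mul_le_mul_of_nonneg_left ?_ (mul_pos hK.H₁_pos hK.G₁_pos).le
  have : (∫ v, v ^ γ ∂μ) * μ.real univ ≤ C * C :=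
    mul_le_mul hμ.intγ_le hμ.mass_le n1 (n2.trans hμ.intγ_le)
  linarith

/-- The increment of a test function under coagulation. -/
def Dt (R ε : ℝ) (p : ℝ × ℝ) : ℝ := tf R ε (p.1 + p.2) - tf R ε p.1 - tf R ε p.2

lemma Dt_cont (R ε : ℝ) : Continuous (Dt R ε) := by
  have := tf_cont R ε
  unfold Dt
  fun_prop

lemma Dt_bdd {R ε : ℝ} (hR : 0 < R) (hε : 0 < ε) (p : ℝ × ℝ) : |Dt R ε p| ≤ 6 * R := by
  have h1 := abs_le.1 (tf_bdd hR hε (p.1 + p.2))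
  have h2 := abs_le.1 (tf_bdd hR hε p.1)
  have h3 := abs_le.1 (tf_bdd hR hε p.2)
  unfold Dt
  rw [abs_le]
  constructor <;> linarith [h1.1, h1.2, h2.1, h2.2, h3.1, h3.2]

lemma KD_int (hK : KernelAssumptionA K h g γ H H₀ H₁ G₀ G₁ k) (hμ : Good γ C v₀ μ)
    {R ε : ℝ} (hR : 0 < R) (hε : 0 < ε) :
    Integrable (fun p => Kt K p * Dt R ε p) (μ.prod μ) := by
  have := hμ.fin
  refine (Kt_int hK hμ).1.mul_bdd (c := 6 * R) (Dt_cont R ε).aestronglyMeasurable ?_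
  filter_upwards with p
  exact Dt_bdd hR hε p

lemma KD_bound (hK : KernelAssumptionA K h g γ H H₀ H₁ G₀ G₁ k) (hμ : Good γ C v₀ μ)
    {R ε : ℝ} (hR : 0 < R) (hε : 0 < ε) :
    |∫ p, Kt K p * Dt R ε p ∂(μ.prod μ)| ≤ H₁ * G₁ * (2 * (C * C)) * (6 * R) := by
  have := hμ.fin
  have hI := Kt_int hK hμ
  calc |∫ p, Kt K p * Dt R ε p ∂(μ.prod μ)|
      ≤ ∫ p, |Kt K p * Dt R ε p| ∂(μ.prod μ) := abs_integral_le_integral_abs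
    _ ≤ ∫ p, Kt K p * (6 * R) ∂(μ.prod μ) := by
        refine integral_mono_ae (KD_int hK hμ hR hε).abs (hI.1.mul_const _) ?_
        filter_upwards [ae_pos_prod hμ.conc] with p hp
        have : 0 ≤ Kt K p := by
          rw [Kt_eq hp.1 hp.2]; exact hK.K_nonneg _ _ hp.1.le hp.2.le
        rw [abs_mul, abs_of_nonneg this]
        exact mul_le_mul_of_nonneg_left (Dt_bdd hR hε p) this
    _ ≤ _ := by
        rw [integral_mul_const]
        exact mul_le_mul_of_nonneg_right hI.2 (by linarith)

lemma KD_eq (hK : KernelAssumptionA K h g γ H H₀ H₁ G₀ G₁ k) (hμ : Good γ C v₀ μ)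
    {R ε : ℝ} (hR : 0 < R) (hε : 0 < ε) :
    (∫ v, (∫ v', K v v' * (tf R ε (v + v') - tf R ε v - tf R ε v') ∂μ) ∂μ)
      = ∫ p, Kt K p * Dt R ε p ∂(μ.prod μ) := by
  have := hμ.fin
  rw [integral_prod _ (KD_int hK hμ hR hε)]
  refine integral_congr_ae ?_
  filter_upwards [ae_pos hμ.conc] with v hv
  refine integral_congr_ae ?_
  filter_upwards [ae_pos hμ.conc] with v' hv'
  rw [Kt_eq (K := K) (p := (v, v')) hv hv']
  rfl

lemma psi_int (hμ : Good γ C v₀ μ) (R : ℝ) : Integrable (fun v => v * ramp R v) μ := by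
  refine hμ.int1.mul_bdd (c := 1) (ramp_cont R).aestronglyMeasurable ?_
  filter_upwards with v
  rw [Real.norm_of_nonneg (ramp_nonneg R v)]
  exact ramp_le_one R v

lemma psi_nonneg (hμ : Good γ C v₀ μ) (R : ℝ) : 0 ≤ ∫ v, v * ramp R v ∂μ := by
  refine integral_nonneg_of_ae ?_
  filter_upwards [ae_pos hμ.conc] with v hv
  exact mul_nonneg hv.le (ramp_nonneg R v)

lemma psi_le (hμ : Good γ C v₀ μ) (R : ℝ) : ∫ v, v * ramp R v ∂μ ≤ v₀ := by
  rw [← hμ.int1_eq]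
  refine integral_mono_ae (psi_int hμ R) hμ.int1 ?_
  filter_upwards [ae_pos hμ.conc] with v hv
  have := ramp_le_one R v
  nlinarith

lemma tf_int_bounds (hμ : Good γ C v₀ μ) {R ε : ℝ} (hR : 0 < R) (hε : 0 < ε) :
    v₀ - (∫ v, v * ramp R v ∂μ) - ε * C ≤ ∫ v, tf R ε v ∂μ ∧
      ∫ v, tf R ε v ∂μ ≤ v₀ - ∫ v, v * ramp R v ∂μ := by
  have := hμ.fin
  have hψ := psi_int hμ R
  have ht : Integrable (tf R ε) μ := by
    refine Integrable.of_bound (tf_cont R ε).aestronglyMeasurable (2 * R) ?_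
    filter_upwards with v
    exact tf_bdd hR hε v
  have e : ∫ v, (v - v * ramp R v) ∂μ = v₀ - ∫ v, v * ramp R v ∂μ := by
    rw [integral_sub hμ.int1 hψ, hμ.int1_eq]
  have i : Integrable (fun v => v - v * ramp R v) μ := hμ.int1.sub hψ
  constructor
  · have e2 : ∫ v, (v - v * ramp R v - ε) ∂μ
        = v₀ - (∫ v, v * ramp R v ∂μ) - μ.real univ * ε := by
      rw [integral_sub i (integrable_const ε)]
      simp only [integral_const, smul_eq_mul]
      rw [← e]
    have : ∫ v, (v - v * ramp R v - ε) ∂μ ≤ ∫ v, tf R ε v ∂μ := by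
      refine integral_mono (i.sub (integrable_const ε)) ht ?_
      intro v
      have := le_tf (R := R) (ε := ε) (v := v)
      simp only
      linarith
    have := mul_le_mul_of_nonneg_right hμ.mass_le hε.le
    linarith
  · rw [← e]
    refine integral_mono_ae ht i ?_
    filter_upwards [ae_pos hμ.conc] with v hv
    have := tf_le (R := R) hε hv
    linarith

/-- Pointwise lower bound for minus the coagulation increment. -/
lemma pointwise (hK : KernelAssumptionA K h g γ H H₀ H₁ G₀ G₁ k) {R R₀ ε v v' : ℝ}
    (hR : 0 < R) (hε : 0 < ε) (hR₀ : 3 * R₀ ≤ R) (hH : H ≤ R) (hv : 0 < v) (hv' : 0 < v') :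
    (Iic R₀).indicator (fun x => x) v *
        (H₀ * (G₀ * (1 / 4) ^ k) * R ^ (γ - 1) * (v' * ramp R v')) - 2 * ε * K v v'
      ≤ - (K v v' * (tf R ε (v + v') - tf R ε v - tf R ε v')) := by
  have k0 := hK.K_nonneg v v' hv.le hv'.le
  have a1 := tf_le (R := R) hε (add_pos hv hv')
  have a2 := le_tf (R := R) (ε := ε) (v := v)
  have a3 := le_tf (R := R) (ε := ε) (v := v')
  have m1 : ramp R v ≤ ramp R (v + v') := ramp_mono hR (by linarith)
  have m2 : ramp R v' ≤ ramp R (v + v') := ramp_mono hR (by linarith)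
  have D1 : v * (ramp R (v + v') - ramp R v) - 2 * ε
      ≤ - (tf R ε (v + v') - tf R ε v - tf R ε v') := by
    have : 0 ≤ v' * (ramp R (v + v') - ramp R v') := mul_nonneg hv'.le (by linarith)
    nlinarith
  have D2 : K v v' * (v * (ramp R (v + v') - ramp R v) - 2 * ε)
      ≤ - (K v v' * (tf R ε (v + v') - tf R ε v - tf R ε v')) := by
    rw [← mul_neg]
    exact mul_le_mul_of_nonneg_left D1 k0
  refine le_trans ?_ D2
  have D3 : (Iic R₀).indicator (fun x => x) v *
        (H₀ * (G₀ * (1 / 4) ^ k) * R ^ (γ - 1) * (v' * ramp R v'))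
      ≤ K v v' * (v * (ramp R (v + v') - ramp R v)) := by
    have n : 0 ≤ K v v' * (v * (ramp R (v + v') - ramp R v)) :=
      mul_nonneg k0 (mul_nonneg hv.le (by linarith))
    by_cases hvR : v ∈ Iic R₀
    · rw [indicator_of_mem hvR]
      have hvR' : v ≤ R₀ := hvR
      rcases le_total v' R with h1 | h1
      · rw [ramp_zero hR h1]; simpa using n
      · have r0 : ramp R v = 0 := ramp_zero hR (by linarith)
        have kl := K_lower hK hv hR (by linarith) h1 hH
        have rn := ramp_nonneg R v'
        rw [r0, sub_zero]
        calc _ = (H₀ * (G₀ * (1 / 4) ^ k) * R ^ (γ - 1) * v') * (v * ramp R v') := by ring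
          _ ≤ K v v' * (v * ramp R (v + v')) :=
            mul_le_mul kl (mul_le_mul_of_nonneg_left m2 hv.le) (mul_nonneg hv.le rn) k0
    · rw [indicator_of_notMem hvR]; simpa using n
  linarith

lemma KD_lower (hK : KernelAssumptionA K h g γ H H₀ H₁ G₀ G₁ k) (hμ : Good γ C v₀ μ)
    {R R₀ ε m₀ : ℝ} (hR : 0 < R) (hε : 0 < ε) (hR₀ : 3 * R₀ ≤ R) (hH : H ≤ R)
    (hm : m₀ ≤ ∫ v, (Iic R₀).indicator (fun x => x) v ∂μ) :
    m₀ * (H₀ * (G₀ * (1 / 4) ^ k) * R ^ (γ - 1) * ∫ v, v * ramp R v ∂μ)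
        - 2 * ε * (H₁ * G₁ * (2 * (C * C)))
      ≤ - ∫ p, Kt K p * Dt R ε p ∂(μ.prod μ) := by
  have := hμ.fin
  have hI := Kt_int hK hμ
  have i1 : Integrable ((Iic R₀).indicator (fun x : ℝ => x)) μ :=
    hμ.int1.indicator measurableSet_Iic
  have i2 : Integrable
      (fun v' => H₀ * (G₀ * (1 / 4) ^ k) * R ^ (γ - 1) * (v' * ramp R v')) μ :=
    (psi_int hμ R).const_mul _
  have i3 := i1.mul_prod i2
  have key : ∫ p : ℝ × ℝ, ((Iic R₀).indicator (fun x => x) p.1 *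
        (H₀ * (G₀ * (1 / 4) ^ k) * R ^ (γ - 1) * (p.2 * ramp R p.2)) - 2 * ε * Kt K p)
          ∂(μ.prod μ)
      ≤ ∫ p, - (Kt K p * Dt R ε p) ∂(μ.prod μ) := by
    refine integral_mono_ae (i3.sub (hI.1.const_mul _)) (KD_int hK hμ hR hε).neg ?_
    filter_upwards [ae_pos_prod hμ.conc] with p hp
    rw [Kt_eq hp.1 hp.2]
    exact pointwise hK hR hε hR₀ hH hp.1 hp.2
  rw [integral_neg] at key
  refine le_trans ?_ key
  rw [integral_sub i3 (hI.1.const_mul _), integral_prod_mul ((Iic R₀).indicator (fun x : ℝ => x))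
      (fun v' => H₀ * (G₀ * (1 / 4) ^ k) * R ^ (γ - 1) * (v' * ramp R v')), integral_const_mul,
    integral_const_mul]
  have c0 : 0 ≤ H₀ * (G₀ * (1 / 4 : ℝ) ^ k) * R ^ (γ - 1) := by
    have := hK.H₀_pos
    have := hK.G₀_pos
    positivity
  have := mul_le_mul_of_nonneg_right hm (mul_nonneg c0 (psi_nonneg hμ R))
  have := mul_le_mul_of_nonneg_left hI.2 (by linarith : 0 ≤ 2 * ε)
  linarith

end fixed

/-! ### Time evolution -/

section time

variable {K h : ℝ → ℝ → ℝ} {g : ℝ → ℝ} {γ H H₀ H₁ G₀ G₁ k : ℝ}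

lemma A_integrable (hK : KernelAssumptionA K h g γ H H₀ H₁ G₀ G₁ k) {C v₀ T : ℝ} (hT : 0 < T)
    {f : ℝ → Measure ℝ} {fin : Measure ℝ} (hf : IsWeakSolution K γ T f fin)
    (hg : ∀ t ∈ Icc (0 : ℝ) T, Good γ C v₀ (f t)) {R ε : ℝ} (hR : 0 < R) (hε : 0 < ε)
    {a b : ℝ} (ha : a ∈ Icc 0 T) (hb : b ∈ Icc 0 T) :
    IntervalIntegrable (fun s => ∫ p, Kt K p * Dt R ε p ∂((f s).prod (f s))) volume a b := by
  let μ : ℝ → Measure ℝ := fun s => f (projIcc 0 T hT.le s)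
  have hμg : ∀ s, Good γ C v₀ (μ s) := fun s => hg _ (projIcc 0 T hT.le s).2
  have hfin : ∀ s, IsFiniteMeasure (μ s) := fun s => (hμg s).fin
  have hcont : ∀ φ : ℝ → ℝ, Continuous φ → (∃ M : ℝ, ∀ v, |φ v| ≤ M) →
      Continuous (fun s => ∫ v, φ v ∂(μ s)) := by
    intro φ h1 h2
    have := (continuousOn_iff_continuous_domRestrict.1 (hf.time_cont φ h1 h2)).comp
      (continuous_projIcc (h := hT.le))
    exact this
  have hmeas := aux_meas_prod μ C (fun s => (hμg s).mass_le) hcont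
    (fun p => Kt K p * Dt R ε p)
    ((Kt_meas hK).mul (Dt_cont R ε).measurable).stronglyMeasurable
  have hInt : IntervalIntegrable
      (fun s => ∫ p, Kt K p * Dt R ε p ∂((μ s).prod (μ s))) volume a b := by
    refine (intervalIntegrable_const (c := H₁ * G₁ * (2 * (C * C)) * (6 * R))).mono_fun
      hmeas.aestronglyMeasurable ?_
    filter_upwards with s
    exact (KD_bound hK (hμg s) hR hε).trans (le_abs_self _)
  refine hInt.congr ?_
  intro s hs
  have hs' : s ∈ Icc 0 T := by
    have := uIoc_subset_uIcc hs
    exact (uIcc_subset_Icc ha hb) this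
  simp only [μ, projIcc_of_mem hT.le hs']

lemma step (hK : KernelAssumptionA K h g γ H H₀ H₁ G₀ G₁ k) {C v₀ T : ℝ} (hT : 0 < T)
    {f : ℝ → Measure ℝ} {fin : Measure ℝ} (hf : IsWeakSolution K γ T f fin)
    (hg : ∀ t ∈ Icc (0 : ℝ) T, Good γ C v₀ (f t)) {R : ℝ} (hR : 0 < R)
    {t t' a B : ℝ} (h0 : 0 ≤ t) (htt : t ≤ t') (h1 : t' ≤ T)
    (hA : ∀ s ∈ Icc t t', ∀ ε : ℝ, 0 < ε →
      a - ε * B ≤ - ∫ p, Kt K p * Dt R ε p ∂((f s).prod (f s))) :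
    (t' - t) / 2 * a ≤ (∫ v, v * ramp R v ∂(f t')) - ∫ v, v * ramp R v ∂(f t) := by
  have m0 : (0 : ℝ) ∈ Icc 0 T := ⟨le_rfl, hT.le⟩
  have mt : t ∈ Icc 0 T := ⟨h0, htt.trans h1⟩
  have mt' : t' ∈ Icc 0 T := ⟨h0.trans htt, h1⟩
  have main : ∀ ε : ℝ, 0 < ε → (t' - t) / 2 * a ≤
      ((∫ v, v * ramp R v ∂(f t')) - ∫ v, v * ramp R v ∂(f t))
        + ε * ((t' - t) / 2 * B + C) := by
    intro ε hε
    have weak : ∀ r ∈ Icc (0 : ℝ) T, (∫ v, tf R ε v ∂(f r)) - (∫ v, tf R ε v ∂fin) =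
        (1 / 2) * ∫ s in (0 : ℝ)..r, (∫ p, Kt K p * Dt R ε p ∂((f s).prod (f s))) := by
      intro r hr
      rw [hf.weak_form (tf R ε) (tf_cont R ε) (tf_compact hR hε) (tf_tsupport hR hε) r hr]
      congr 1
      refine intervalIntegral.integral_congr ?_
      intro s hs
      have hs' : s ∈ Icc 0 T := (uIcc_subset_Icc m0 hr) hs
      exact KD_eq hK (hg s hs') hR hε
    have w1 := weak t mt
    have w2 := weak t' mt'
    have adj := intervalIntegral.integral_add_adjacent_intervals
      (A_integrable hK hT hf hg hR hε m0 mt) (A_integrable hK hT hf hg hR hε mt mt')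
    have lower : (t' - t) * (a - ε * B) ≤
        - ∫ s in t..t', (∫ p, Kt K p * Dt R ε p ∂((f s).prod (f s))) := by
      rw [← intervalIntegral.integral_neg]
      have := intervalIntegral.integral_mono_on htt
        (intervalIntegrable_const (c := a - ε * B) (μ := volume))
        (A_integrable hK hT hf hg hR hε mt mt').neg (fun s hs => hA s hs ε hε)
      rw [intervalIntegral.integral_const, smul_eq_mul] at this
      exact this
    have b1 := (tf_int_bounds (hg t mt) hR hε).2
    have b2 := (tf_int_bounds (hg t' mt') hR hε).1
    rw [← adj] at w2
    nlinarith
  by_contra hcon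
  rw [not_le] at hcon
  set D := (t' - t) / 2 * B + C
  set x := (t' - t) / 2 * a
  set y := (∫ v, v * ramp R v ∂(f t')) - ∫ v, v * ramp R v ∂(f t)
  have hd : 0 < |D| + 1 := by positivity
  have := main ((x - y) / (2 * (|D| + 1))) (div_pos (by linarith) (by linarith))
  have h2 : (x - y) / (2 * (|D| + 1)) * D ≤ (x - y) / 2 := by
    rw [div_mul_eq_mul_div, div_le_div_iff₀ (by linarith) (by norm_num)]
    have := le_abs_self D
    nlinarith
  linarith

/-- Algebraic growth of the tail mass over one time step. -/
lemma growth_s11 (hK : KernelAssumptionA K h g γ H H₀ H₁ G₀ G₁ k) {C v₀ T : ℝ} (hT : 0 < T)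
    {f : ℝ → Measure ℝ} {fin : Measure ℝ} (hf : IsWeakSolution K γ T f fin)
    (hg : ∀ t ∈ Icc (0 : ℝ) T, Good γ C v₀ (f t)) {R R₀ m₀ : ℝ} (hR : 0 < R) (hm₀ : 0 < m₀)
    (hR₀ : 3 * R₀ ≤ R) (hH : H ≤ R)
    (hm : ∀ t ∈ Icc (0 : ℝ) T, m₀ ≤ ∫ v, (Iic R₀).indicator (fun x => x) v ∂(f t))
    {t t' : ℝ} (h0 : 0 ≤ t) (htt : t ≤ t') (h1 : t' ≤ T) :
    (1 + (t' - t) / 2 * (m₀ * (H₀ * (G₀ * (1 / 4) ^ k))) * R ^ (γ - 1)) *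
      (∫ v, v * ramp R v ∂(f t)) ≤ ∫ v, v * ramp R v ∂(f t') := by
  have c0 : 0 ≤ m₀ * (H₀ * (G₀ * (1 / 4 : ℝ) ^ k)) * R ^ (γ - 1) := by
    have := hK.H₀_pos
    have := hK.G₀_pos
    positivity
  have low : ∀ s ∈ Icc (0 : ℝ) T, ∀ ε : ℝ, 0 < ε →
      m₀ * (H₀ * (G₀ * (1 / 4 : ℝ) ^ k)) * R ^ (γ - 1) * (∫ v, v * ramp R v ∂(f s))
        - ε * (2 * (H₁ * G₁ * (2 * (C * C))))
      ≤ - ∫ p, Kt K p * Dt R ε p ∂((f s).prod (f s)) := by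
    intro s hs ε hε
    have := KD_lower hK (hg s hs) hR hε hR₀ hH (hm s hs)
    linarith
  have mono : ∀ s ∈ Icc t t', (∫ v, v * ramp R v ∂(f t)) ≤ ∫ v, v * ramp R v ∂(f s) := by
    intro s hs
    have := step hK hT hf hg hR (a := 0) (B := 2 * (H₁ * G₁ * (2 * (C * C)))) h0 hs.1
      (hs.2.trans h1) (fun r hr ε hε => by
        have hr' : r ∈ Icc 0 T := ⟨h0.trans hr.1, hr.2.trans (hs.2.trans h1)⟩
        refine le_trans ?_ (low r hr' ε hε)
        have := mul_nonneg c0 (psi_nonneg (hg r hr') R)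
        linarith)
    linarith
  have := step hK hT hf hg hR
    (a := m₀ * (H₀ * (G₀ * (1 / 4 : ℝ) ^ k)) * R ^ (γ - 1) * (∫ v, v * ramp R v ∂(f t)))
    (B := 2 * (H₁ * G₁ * (2 * (C * C)))) h0 htt h1 (fun r hr ε hε => by
      have hr' : r ∈ Icc 0 T := ⟨h0.trans hr.1, hr.2.trans h1⟩
      refine le_trans ?_ (low r hr' ε hε)
      have := mul_le_mul_of_nonneg_left (mono r hr) c0
      linarith)
  linarith

lemma iterate (hK : KernelAssumptionA K h g γ H H₀ H₁ G₀ G₁ k) {C v₀ T : ℝ} (hT : 0 < T)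
    {f : ℝ → Measure ℝ} {fin : Measure ℝ} (hf : IsWeakSolution K γ T f fin)
    (hg : ∀ t ∈ Icc (0 : ℝ) T, Good γ C v₀ (f t)) {R R₀ m₀ : ℝ} (hR : 0 < R) (hm₀ : 0 < m₀)
    (hR₀ : 3 * R₀ ≤ R) (hH : H ≤ R)
    (hm : ∀ t ∈ Icc (0 : ℝ) T, m₀ ≤ ∫ v, (Iic R₀).indicator (fun x => x) v ∂(f t))
    {δ : ℝ} (hδ : 0 < δ) (N : ℕ) : ∀ t : ℝ, 0 ≤ t → t + N * δ ≤ T →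
    (δ / 2 * (m₀ * (H₀ * (G₀ * (1 / 4) ^ k))) * R ^ (γ - 1)) ^ N *
      (∫ v, v * ramp R v ∂(f t)) ≤ v₀ := by
  have c0 : 0 ≤ δ / 2 * (m₀ * (H₀ * (G₀ * (1 / 4 : ℝ) ^ k))) * R ^ (γ - 1) := by
    have := hK.H₀_pos
    have := hK.G₀_pos
    positivity
  induction N with
  | zero =>
    intro t h0 h1
    have h1' : t ≤ T := by simpa using h1
    simpa using psi_le (hg t ⟨h0, h1'⟩) R
  | succ N ih =>
    intro t h0 h1
    push_cast at h1
    have hN : 0 ≤ (N : ℝ) * δ := by positivity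
    have hg1 := growth_s11 hK hT hf hg hR hm₀ hR₀ hH hm (t := t) (t' := t + δ) h0 (by linarith)
      (by nlinarith)
    rw [add_sub_cancel_left] at hg1
    have hps := psi_nonneg (hg t ⟨h0, by nlinarith⟩) R
    have ih1 := ih (t + δ) (by linarith) (by linarith)
    refine le_trans ?_ ih1
    rw [pow_succ, mul_assoc]
    refine mul_le_mul_of_nonneg_left ?_ (pow_nonneg c0 N)
    linarith

end time

/-! ### From tails to moments -/

lemma lintegral_moment_le {μ : Measure ℝ} [IsFiniteMeasure μ] {m D : ℝ} (hm : 0 ≤ m) (hD : 0 ≤ D)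
    (htail : ∀ j : ℕ, μ.real (Ici (j : ℝ)) * ((j : ℝ) + 1) ^ (m + 2) ≤ D) :
    ∫⁻ v in Ioi (0 : ℝ), ENNReal.ofReal (v ^ m) ∂μ
      ≤ ENNReal.ofReal (∑' j : ℕ, D * (1 / ((j : ℝ) + 1) ^ 2)) := by
  have hs : Summable (fun j : ℕ => D * (1 / ((j : ℝ) + 1) ^ 2)) := by
    have h1 : Summable (fun n : ℕ => 1 / (n : ℝ) ^ 2) :=
      Real.summable_one_div_nat_pow.2 (by norm_num)
    have h2 := (summable_nat_add_iff 1).2 h1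
    refine Summable.mul_left D ?_
    simpa using h2
  have hpt : ∀ v ∈ Ioi (0 : ℝ), ENNReal.ofReal (v ^ m) ≤
      ∑' j : ℕ, (Ici (j : ℝ)).indicator (fun _ => ENNReal.ofReal (((j : ℝ) + 1) ^ m)) v := by
    intro v hv
    have hv0 : 0 < v := hv
    refine le_trans ?_ (ENNReal.le_tsum ⌊v⌋₊)
    rw [indicator_of_mem (show v ∈ Ici ((⌊v⌋₊ : ℕ) : ℝ) from Nat.floor_le hv0.le)]
    refine ENNReal.ofReal_le_ofReal ?_
    exact Real.rpow_le_rpow hv0.le (Nat.lt_floor_add_one v).le hm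
  calc ∫⁻ v in Ioi (0 : ℝ), ENNReal.ofReal (v ^ m) ∂μ
      ≤ ∫⁻ v in Ioi (0 : ℝ), ∑' j : ℕ,
          (Ici (j : ℝ)).indicator (fun _ => ENNReal.ofReal (((j : ℝ) + 1) ^ m)) v ∂μ :=
        setLIntegral_mono' measurableSet_Ioi hpt
    _ ≤ ∫⁻ v, ∑' j : ℕ,
          (Ici (j : ℝ)).indicator (fun _ => ENNReal.ofReal (((j : ℝ) + 1) ^ m)) v ∂μ :=
        setLIntegral_le_lintegral _ _
    _ = ∑' j : ℕ, ENNReal.ofReal (((j : ℝ) + 1) ^ m) * μ (Ici (j : ℝ)) := by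
        rw [lintegral_tsum]
        · congr 1
          funext j
          rw [lintegral_indicator_const measurableSet_Ici]
        · intro j
          exact (measurable_const.indicator measurableSet_Ici).aemeasurable
    _ ≤ ∑' j : ℕ, ENNReal.ofReal (D * (1 / ((j : ℝ) + 1) ^ 2)) := by
        refine ENNReal.tsum_le_tsum fun j => ?_
        have hj : (0 : ℝ) < (j : ℝ) + 1 := by positivity
        rw [← ofReal_measureReal, ← ENNReal.ofReal_mul (by positivity)]
        refine ENNReal.ofReal_le_ofReal ?_
        have h1 := htail j
        rw [Real.rpow_add hj, Real.rpow_two] at h1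
        rw [mul_one_div, le_div_iff₀ (by positivity)]
        linarith
    _ = _ := (ENNReal.ofReal_tsum_of_nonneg (fun j => by positivity) hs).symm

lemma tail_le {γ C v₀ : ℝ} {μ : Measure ℝ} (hμ : Good γ C v₀ μ) {R : ℝ} (hR : 1 ≤ R) :
    μ.real (Ici (2 * R)) ≤ ∫ v, v * ramp R v ∂μ := by
  have := hμ.fin
  rw [← integral_indicator_one measurableSet_Ici]
  refine integral_mono_ae ((integrable_const (1 : ℝ)).indicator measurableSet_Ici)
    (psi_int hμ R) ?_
  filter_upwards [ae_pos hμ.conc] with v hv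
  by_cases hvR : v ∈ Ici (2 * R)
  · rw [indicator_of_mem hvR]
    have h2 : 2 * R ≤ v := hvR
    rw [ramp_one (by linarith) h2]
    simp only [Pi.one_apply]
    linarith
  · rw [indicator_of_notMem hvR]
    exact mul_nonneg hv.le (ramp_nonneg R v)

lemma small_mass {γ C v₀ : ℝ} (hγ : 1 < γ) (hv₀ : 0 < v₀) :
    ∃ R₀ : ℝ, ∀ μ : Measure ℝ, Good γ C v₀ μ →
      v₀ / 2 ≤ ∫ v, (Iic R₀).indicator (fun x => x) v ∂μ := by
  set e := v₀ / (2 * (|C| + 1)) with he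
  have hC1 : 0 < |C| + 1 := by positivity
  have hepos : 0 < e := by positivity
  have hlim := tendsto_rpow_atTop (show 0 < γ - 1 by linarith)
  obtain ⟨R₁, hR₁⟩ := eventually_atTop.1 (hlim.eventually_ge_atTop (1 / e))
  refine ⟨R₁, fun μ hμ => ?_⟩
  have i1 : Integrable ((Iic R₁).indicator (fun x : ℝ => x)) μ :=
    hμ.int1.indicator measurableSet_Iic
  have i2 : Integrable (fun v => e * v ^ γ) μ := hμ.intγ.const_mul e
  have h1 : ∫ v, v ∂μ ≤ ∫ v, ((Iic R₁).indicator (fun x => x) v + e * v ^ γ) ∂μ := by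
    refine integral_mono_ae hμ.int1 (i1.add i2) ?_
    filter_upwards [ae_pos hμ.conc] with v hv
    have hp : 0 ≤ e * v ^ γ := by positivity
    by_cases hvR : v ∈ Iic R₁
    · rw [indicator_of_mem hvR]; linarith
    · rw [indicator_of_notMem hvR]
      have h3 := hR₁ v (le_of_lt (not_le.1 hvR))
      have e1 : v ^ γ = v ^ (γ - 1) * v := by
        rw [← Real.rpow_add_one hv.ne']; simp
      rw [e1]
      have h4 : 1 ≤ e * v ^ (γ - 1) := by
        rw [div_le_iff₀ hepos] at h3; linarith
      nlinarith
  rw [integral_add i1 i2, integral_const_mul, hμ.int1_eq] at h1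
  have h2 : e * ∫ v, v ^ γ ∂μ ≤ v₀ / 2 := by
    have h5 : ∫ v, v ^ γ ∂μ ≤ |C| + 1 := by
      have := hμ.intγ_le
      have := le_abs_self C
      linarith
    calc e * ∫ v, v ^ γ ∂μ ≤ e * (|C| + 1) := mul_le_mul_of_nonneg_left h5 hepos.le
      _ = v₀ / 2 := by rw [he]; field_simp
  linarith

/-- All moments of order `m ≥ 2` of a mass-conserving weak solution
are uniformly bounded on `[0,T]` for every `T` strictly before the final time `T'`. -/
theorem moments_bounded_before_gelation
    (K h : ℝ → ℝ → ℝ) (g : ℝ → ℝ) (γ H H₀ H₁ G₀ G₁ k : ℝ)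
    (hK : KernelAssumptionA K h g γ H H₀ H₁ G₀ G₁ k)
    (T' : ℝ) (hT' : 0 < T')
    (fin : Measure ℝ) (hconc : fin (Iic 0) = 0)
    (hγmom : Integrable (fun v => 1 + v ^ γ) fin)
    (hv₀ : 0 < ∫ v, v ∂fin)
    (f : ℝ → Measure ℝ) (hf : IsWeakSolution K γ T' f fin)
    (hmc : IsMassConserving T' f fin) :
    ∀ m : ℝ, 2 ≤ m → ∀ T ∈ Ioo (0 : ℝ) T', ∃ C : ℝ,
      ∀ t ∈ Icc (0 : ℝ) T,
        (∫⁻ v in Ioi (0 : ℝ), ENNReal.ofReal (v ^ m) ∂(f t)) ≤ ENNReal.ofReal C := by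
  intro m hm T hT
  obtain ⟨C, hC⟩ := hf.moment_bound
  set v₀ := ∫ v, v ∂fin with hv₀def
  have hg : ∀ t ∈ Icc (0 : ℝ) T', Good γ C v₀ (f t) := fun t ht =>
    good_of (hf.conc t ht) (hC t ht).1 (hC t ht).2 (hmc.2 t ht).1 (hmc.2 t ht).2
  have hγ := hK.γ_gt_one
  obtain ⟨R₀, hR₀⟩ := small_mass (C := C) hγ hv₀
  have hTT : 0 < T' - T := by linarith [hT.2]
  have hC0 : 0 ≤ C :=
    le_trans measureReal_nonneg (hg 0 ⟨le_rfl, hT'.le⟩).mass_le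
  -- number of iterations
  obtain ⟨N₀, hN₀⟩ := exists_nat_ge ((m + 2) / (γ - 1))
  set N := N₀ + 1 with hN
  have hNpos : (0 : ℝ) < N := by rw [hN]; positivity
  have hNm : m + 2 ≤ (γ - 1) * N := by
    have h1 : (m + 2) / (γ - 1) ≤ (N : ℝ) := by
      rw [hN]; push_cast; linarith
    rw [div_le_iff₀ (by linarith)] at h1
    linarith
  set δ := (T' - T) / N with hδdef
  have hδ : 0 < δ := div_pos hTT hNpos
  have hNδ : N * δ = T' - T := by rw [hδdef]; field_simp
  set b := δ / 2 * (v₀ / 2 * (H₀ * (G₀ * (1 / 4 : ℝ) ^ k))) with hb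
  have hbpos : 0 < b := by
    have := hK.H₀_pos
    have := hK.G₀_pos
    positivity
  set X := 2 * max H (3 * R₀) with hX
  have hX2 : 2 < X := by
    have := le_max_left H (3 * R₀)
    have := hK.H_gt_one
    linarith
  set D := 4 ^ (m + 2) * (v₀ / b ^ N) + C * (X + 1) ^ (m + 2) with hD
  have hD1 : 0 ≤ 4 ^ (m + 2) * (v₀ / b ^ N) := by positivity
  have hD2 : 0 ≤ C * (X + 1) ^ (m + 2) := mul_nonneg hC0 (by positivity)
  refine ⟨∑' j : ℕ, D * (1 / ((j : ℝ) + 1) ^ 2), fun t ht => ?_⟩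
  have htT : t ∈ Icc (0 : ℝ) T' := ⟨ht.1, ht.2.trans hT.2.le⟩
  have hgt := hg t htT
  have := hgt.fin
  refine lintegral_moment_le (by linarith) (by linarith) (fun j => ?_)
  have hj0 : (0 : ℝ) ≤ (j : ℝ) := Nat.cast_nonneg j
  rcases lt_or_ge (j : ℝ) X with hjX | hjX
  · have h1 : (f t).real (Ici (j : ℝ)) ≤ C := (measureReal_mono (subset_univ _)).trans hgt.mass_le
    have h2 : ((j : ℝ) + 1) ^ (m + 2) ≤ (X + 1) ^ (m + 2) :=
      Real.rpow_le_rpow (by linarith) (by linarith) (by linarith)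
    have := mul_le_mul h1 h2 (by positivity) hC0
    linarith
  · set R := (j : ℝ) / 2 with hR
    have hRm : max H (3 * R₀) ≤ R := by linarith
    have hR1 : 1 ≤ R := by linarith
    have hRpos : 0 < R := by linarith
    have it := iterate hK hT' hf hg hRpos (half_pos hv₀) ((le_max_right _ _).trans hRm)
      ((le_max_left _ _).trans hRm) (fun s hs => hR₀ _ (hg s hs)) hδ N t ht.1
      (by rw [hNδ]; linarith [ht.2])
    rw [← hb, mul_pow, ← Real.rpow_mul_natCast hRpos.le] at it
    have tl := tail_le hgt hR1
    rw [show 2 * R = (j : ℝ) by rw [hR]; ring] at tl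
    have r1 : R ^ (m + 2) ≤ R ^ ((γ - 1) * (N : ℝ)) := Real.rpow_le_rpow_of_exponent_le hR1 hNm
    have r2 : ((j : ℝ) + 1) ^ (m + 2) ≤ 4 ^ (m + 2) * R ^ (m + 2) := by
      rw [← Real.mul_rpow (by norm_num) hRpos.le]
      exact Real.rpow_le_rpow (by linarith) (by linarith) (by linarith)
    have ps := psi_nonneg hgt R
    have hbN : 0 < b ^ N := pow_pos hbpos N
    have q : R ^ (m + 2) * (∫ v, v * ramp R v ∂(f t)) ≤ v₀ / b ^ N := by
      rw [le_div_iff₀ hbN]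
      refine le_trans ?_ it
      have := mul_le_mul_of_nonneg_left (mul_le_mul_of_nonneg_right r1 ps) hbN.le
      linarith
    calc (f t).real (Ici (j : ℝ)) * ((j : ℝ) + 1) ^ (m + 2)
        ≤ (∫ v, v * ramp R v ∂(f t)) * (4 ^ (m + 2) * R ^ (m + 2)) :=
          mul_le_mul tl r2 (by positivity) ps
      _ = 4 ^ (m + 2) * (R ^ (m + 2) * (∫ v, v * ramp R v ∂(f t))) := by ring
      _ ≤ 4 ^ (m + 2) * (v₀ / b ^ N) := mul_le_mul_of_nonneg_left q (by positivity)
      _ ≤ D := by linarith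
end
end
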